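/- (Proposition A) Let μ > 0 and let (γ₁,γ₂) be a generic μ-admissible pair of closed regular curves in S² with periods l₁, l₂ > 0, parametrized so that |γᵢ'(s)|²(1+κᵢ(s)²) = 4 for i = 1,2, with lifts c₁, c₂ and associated map f_{γ₁,γ₂}. Suppose #(γ₁) = #(γ₂) = 1, i.e. each γᵢ has exactly one crossing. Then there exist (s₁,s₂), (u₁,u₂) ∈ ℝ² with f_{γ₁,γ₂}(u₁,u₂) = −f_{γ₁,γ₂}(s₁,s₂); equivalently, the extrinsic diameter of the image of f_{γ₁,γ₂} in S³ equals π. -/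

import Mathlib

noncomputable section

open Matrix

/-- Euclidean 3-space (as triples of reals). -/
abbrev R3 : Type := Fin 3 → ℝ

/-- The Euclidean inner product on ℝ³. -/
def dot3 (a b : R3) : ℝ := a 0 * b 0 + a 1 * b 1 + a 2 * b 2

/-- The Euclidean norm on ℝ³. -/
def norm3 (a : R3) : ℝ := Real.sqrt (dot3 a a)

/-- The cross product on ℝ³. -/
def cross3 (a b : R3) : R3 :=
  ![a 1 * b 2 - a 2 * b 1, a 2 * b 0 - a 0 * b 2, a 0 * b 1 - a 1 * b 0]

/-- The determinant of three vectors in ℝ³. -/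
def det3 (a b c : R3) : ℝ := dot3 a (cross3 b c)

/-- `γ : ℝ → ℝ³` is a regular curve in the unit sphere S²:
it is smooth, takes values in S², and has nowhere-vanishing derivative. -/
structure IsRegularCurve (γ : ℝ → R3) : Prop where
  smooth : ContDiff ℝ (⊤ : ℕ∞) γ
  sphere : ∀ s, dot3 (γ s) (γ s) = 1
  reg : ∀ s, deriv γ s ≠ 0

/-- The geodesic curvature `κ(s) = det(γ, γ', γ'')/|γ'|³` of a curve in S². -/
def kappa (γ : ℝ → R3) (s : ℝ) : ℝ :=
  det3 (γ s) (deriv γ s) (deriv (deriv γ) s) / norm3 (deriv γ s) ^ 3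

/-- The unit normal `n(s) = (γ × γ')/|γ'|` of a curve in S². -/
def unitNormal (γ : ℝ → R3) (s : ℝ) : R3 :=
  (norm3 (deriv γ s))⁻¹ • cross3 (γ s) (deriv γ s)

/-- `γ` is closed of period `l > 0`. -/
def HasPeriod (γ : ℝ → R3) (l : ℝ) : Prop := 0 < l ∧ ∀ s, γ (s + l) = γ s

/-- 2×2 complex matrices. -/
abbrev Mat2 := Matrix (Fin 2) (Fin 2) ℂ

def E1 : Mat2 := !![0, Complex.I; Complex.I, 0]
def E2 : Mat2 := !![0, -1; 1, 0]
def E3 : Mat2 := !![Complex.I, 0; 0, -Complex.I]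

/-- The identification of ℝ³ with su(2) via the orthonormal basis e₁, e₂, e₃. -/
def toSu2 (v : R3) : Mat2 := (v 0 : ℂ) • E1 + (v 1 : ℂ) • E2 + (v 2 : ℂ) • E3

/-- The adjoint action `Ad(a)x = a x a⁻¹`. -/
def AdM (a x : Mat2) : Mat2 := a * x * a⁻¹

/-- `c : ℝ → SU(2)` is a lift of the regular curve `γ` in S²:
it is smooth (entrywise), takes values in SU(2), and satisfies
`Ad(c(s))e₃ = γ(s)` and `Ad(c(s))e₁ = γ'(s)/|γ'(s)|` under `toSu2`. -/
structure IsLift (γ : ℝ → R3) (c : ℝ → Mat2) : Prop where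
  mem : ∀ s, c s ∈ Matrix.specialUnitaryGroup (Fin 2) ℂ
  smooth : ∀ i j, ContDiff ℝ (⊤ : ℕ∞) fun s => c s i j
  ad3 : ∀ s, AdM (c s) E3 = toSu2 (γ s)
  ad1 : ∀ s, AdM (c s) E1 = toSu2 ((norm3 (deriv γ s))⁻¹ • deriv γ s)

/-- The entrywise derivative of a matrix-valued curve. -/
def matDeriv (c : ℝ → Mat2) (s : ℝ) : Mat2 :=
  Matrix.of fun i j => deriv (fun t => c t i j) s

/-- The map `f_{γ₁,γ₂}(s₁,s₂) = c₁(0)⁻¹ c₁(s₁) c₂(s₂)⁻¹ c₂(0)` associated to lifts `c₁, c₂`. -/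
def fmap (c1 c2 : ℝ → Mat2) (s1 s2 : ℝ) : Mat2 :=
  (c1 0)⁻¹ * c1 s1 * (c2 s2)⁻¹ * c2 0

/-- `(γ₁, γ₂)` is an admissible pair. -/
structure IsAdmissiblePair (γ1 γ2 : ℝ → R3) : Prop where
  reg1 : IsRegularCurve γ1
  reg2 : IsRegularCurve γ2
  param1 : ∀ s, norm3 (deriv γ1 s) ^ 2 * (1 + kappa γ1 s ^ 2) = 4
  param2 : ∀ s, norm3 (deriv γ2 s) ^ 2 * (1 + kappa γ2 s ^ 2) = 4
  curv : ∀ s1 s2, kappa γ2 s2 < kappa γ1 s1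

/-- The restriction of `γ` to `[a,b]` is a shell. -/
def IsShell (γ : ℝ → R3) (a b : ℝ) : Prop :=
  a < b ∧ Set.InjOn γ (Set.Ico a b) ∧ γ a = γ b ∧
    LinearIndependent ℝ ![deriv γ a, deriv γ b]

/-- A positive shell: `det(γ(a), γ'(a), γ'(b)) < 0`. -/
def IsPositiveShell (γ : ℝ → R3) (a b : ℝ) : Prop :=
  IsShell γ a b ∧ det3 (γ a) (deriv γ a) (deriv γ b) < 0

/-- A negative shell: `det(γ(a), γ'(a), γ'(b)) > 0`. -/
def IsNegativeShell (γ : ℝ → R3) (a b : ℝ) : Prop :=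
  IsShell γ a b ∧ 0 < det3 (γ a) (deriv γ a) (deriv γ b)

/-- The unit sphere S² in ℝ³. -/
def sphere2 : Set R3 := {x | dot3 x x = 1}

/-- The μ-circle with center `o ∈ S²`. -/
def muCircle (μ : ℝ) (o : R3) : Set R3 :=
  {x | dot3 x x = 1 ∧ dot3 x o = μ / Real.sqrt (1 + μ ^ 2)}

/-- The (open) interior domain of the μ-circle with center `o ∈ S²`. -/
def muDisk (μ : ℝ) (o : R3) : Set R3 :=
  {x | dot3 x x = 1 ∧ μ / Real.sqrt (1 + μ ^ 2) < dot3 x o}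

def normalize3 (v : R3) : R3 := (norm3 v)⁻¹ • v

/-- `Δ` is the interior domain of the shell `γ|_{[a,b]}`: it is a connected component of the
complement of the image of the shell in S², and for each `s ∈ (a,b)` the points obtained by
pushing `γ(s)` slightly in the direction `σ • n(s)` (σ = 1 for a positive shell, σ = -1 for a
negative shell) belong to `Δ`. -/
def IsInteriorDomain (γ : ℝ → R3) (a b σ : ℝ) (Δ : Set R3) : Prop :=
  (∃ p ∈ sphere2 \ γ '' Set.Icc a b,
      Δ = connectedComponentIn (sphere2 \ γ '' Set.Icc a b) p) ∧
    ∀ s ∈ Set.Ioo a b, ∃ ε > 0, ∀ δ ∈ Set.Ioo (0 : ℝ) ε,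
      normalize3 (γ s + (σ * δ) • unitNormal γ s) ∈ Δ

/-- The center `o_t = (μ γ(t) + n(t))/√(1+μ²)` of the tangent μ-circle to `γ` at `γ(t)`
on the normal side. -/
def tangentCenter (μ : ℝ) (γ : ℝ → R3) (t : ℝ) : R3 :=
  (Real.sqrt (1 + μ ^ 2))⁻¹ • (μ • γ t + unitNormal γ t)

/-- The rotation of ℝ³ through angle `θ` about the oriented (unit) axis `o`. -/
def rot3 (o : R3) (θ : ℝ) (x : R3) : R3 :=
  Real.cos θ • x + Real.sin θ • cross3 o x + ((1 - Real.cos θ) * dot3 o x) • o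

/-- A closed regular curve of period `l` is generic: every self-intersection is a
transversal double point. -/
def IsGeneric (γ : ℝ → R3) (l : ℝ) : Prop :=
  ∀ s t : ℝ, γ s = γ t → (¬∃ k : ℤ, s - t = k * l) →
    LinearIndependent ℝ ![deriv γ s, deriv γ t] ∧
      ∀ u : ℝ, γ u = γ s → (∃ k : ℤ, u - s = k * l) ∨ (∃ k : ℤ, u - t = k * l)

/-- The number of crossings (self-intersection points) of a closed curve of period `l`. -/
def crossings (γ : ℝ → R3) (l : ℝ) : ℕ :=
  Set.ncard {p : R3 | ∃ s t : ℝ, γ s = p ∧ γ t = p ∧ ¬∃ k : ℤ, s - t = k * l}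

/-- The spherical (geodesic) distance on S³, identified with SU(2):
`dist(A,B) = arccos(Re trace(A Bᴴ)/2)`, which corresponds to the round distance on the
unit sphere S³ ⊂ ℝ⁴. -/
def distS3 (A B : Mat2) : ℝ := Real.arccos ((Matrix.trace (A * Bᴴ)).re / 2)

/-- The extrinsic diameter of the image of the map `f` associated to the lifts `c₁, c₂`. -/
def extDiam (c1 c2 : ℝ → Mat2) : ℝ :=
  sSup {d : ℝ | ∃ s1 s2 u1 u2 : ℝ, d = distS3 (fmap c1 c2 s1 s2) (fmap c1 c2 u1 u2)}

/-- The parallel curve `γ^θ = (cos θ) γ + (sin θ) n`. -/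
def parallelCurve (γ : ℝ → R3) (θ : ℝ) (s : ℝ) : R3 :=
  Real.cos θ • γ s + Real.sin θ • unitNormal γ s

/-- The arclength-type parameter `s(t) = (1/2)∫₀ᵗ |γ'(u)|√(1+κ(u)²) du`. -/
def arcParam (γ : ℝ → R3) (t : ℝ) : ℝ :=
  (1 / 2) * ∫ u in (0 : ℝ)..t, norm3 (deriv γ u) * Real.sqrt (1 + kappa γ u ^ 2)

/-!
The relative frames `c₁(s)⁻¹ c₁(u)` form a map from a torus to `S³`, and the claim is that some
relative frame of `γ₁` is minus a relative frame of `γ₂`. If this fails, the relative frames of `γ₁`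
avoid the path `-c₂(a)⁻¹ c₂(u)`, where `u` runs over a shell `[a, b]` of `γ₂`. Stereographic
projection from `-1` turns this into a map from the torus to `ℂ × ℝ ≅ ℝ³` avoiding a path which
comes in from infinity and ends on the axis `0 × ℝ`. Moving the path point in from `∞` shows
that the pull-back of the tautological line bundle, the positive eigenlines of the Pauli matrices
of the difference vectors, is trivial on the torus, hence has a nowhere vanishing section. On the
other hand one component of such a section vanishes exactly where the map meets a ray of the axis.
This happens once, transversally, at the unique crossing of `γ₁`, which is impossible for a function
on a torus. The signs which decide on which ray the points lie come from an argument in the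
spirit of Hopf's Umlaufsatz: the relative frame at the corner of a shell has negative real part.
-/

section

open Filter Topology Set ComplexConjugate

theorem exists_continuousOn_log_of_convex {E : Type*} [NormedAddCommGroup E] [NormedSpace ℝ E]
    {K : Set E} (hK : Convex ℝ K) {f : E → ℂ} (hf : ContinuousOn f K) (h0 : ∀ x ∈ K, f x ≠ 0) :
    ∃ L : E → ℂ, ContinuousOn L K ∧ ∀ x ∈ K, Complex.exp (L x) = f x := by
  classical
  rcases K.eq_empty_or_nonempty with rfl | ⟨x₀, hx₀⟩
  · exact ⟨0, continuousOn_empty _, by simp⟩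
  have := hK.contractibleSpace ⟨x₀, hx₀⟩
  have := hK.locallyPathConnectedSpace
  obtain ⟨F, ⟨-, hF⟩, -⟩ := Complex.isCoveringMap_exp.existsUnique_continuousMap_lifts
    ⟨fun x : K => ⟨f x, h0 x x.2⟩, hf.domRestrict.subtype_mk _⟩ ⟨x₀, hx₀⟩
    (Complex.log (f x₀)) (Subtype.ext (Complex.exp_log (h0 x₀ hx₀)))
  refine ⟨fun x => if hx : x ∈ K then F ⟨x, hx⟩ else 0, ?_, fun x hx => ?_⟩
  · rw [continuousOn_iff_continuous_domRestrict]
    exact F.continuous.congr fun x => by simp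
  · simp only [hx, dite_true]
    exact congrArg Subtype.val (congrFun hF ⟨x, hx⟩)

theorem sub_eq_sub_of_exp_eqOn {X : Type*} [TopologicalSpace X] {s : Set X}
    (hs : IsPreconnected s) {f g : X → ℂ} (hf : ContinuousOn f s) (hg : ContinuousOn g s)
    (h : ∀ x ∈ s, Complex.exp (f x) = Complex.exp (g x)) {a b : X} (ha : a ∈ s) (hb : b ∈ s) :
    f b - f a = g b - g a := by
  have hconst : EqOn f (fun x => g x + (f a - g a)) s := by
    refine Complex.isCoveringMap_exp.eqOn_of_comp_eqOn hs hf (by fun_prop) (fun x hx => ?_) ha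
      (by simp)
    have ha' : Complex.exp (f a - g a) = 1 := by
      rw [Complex.exp_sub, h a ha, div_self (Complex.exp_ne_zero _)]
    simp [Complex.exp_add, h x hx, ha']
  rw [hconst hb]
  ring

/-! ### Zeros of doubly periodic functions -/

theorem tendsto_div_of_hasFDerivAt {𝕜 E F : Type*} [NontriviallyNormedField 𝕜] [CompleteSpace 𝕜]
    [NormedAddCommGroup E] [NormedSpace 𝕜 E] [FiniteDimensional 𝕜 E] [NormedField F]
    [NormedSpace 𝕜 F] {f : E → F} {ℓ : E →L[𝕜] F} {x₀ : E} (hf : HasFDerivAt f ℓ x₀)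
    (hℓ : Function.Injective ℓ) (h0 : f x₀ = 0) :
    Tendsto (fun x => f x / ℓ (x - x₀)) (𝓝[≠] x₀) (𝓝 1) := by
  obtain ⟨C, -, hC⟩ := LinearMap.exists_antilipschitzWith (ℓ : E →ₗ[𝕜] F)
    (LinearMap.ker_eq_bot.2 hℓ)
  have hO : (fun x => x - x₀) =O[𝓝 x₀] fun x => ℓ (x - x₀) :=
    .of_bound C (.of_forall fun x =>
      ZeroHomClass.bound_of_antilipschitz (ℓ : E →ₗ[𝕜] F) hC (x - x₀))
  have hlim := ((hf.isLittleO.trans_isBigO hO).tendsto_div_nhds_zero.mono_left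
    (nhdsWithin_le_nhds (s := {x₀}ᶜ))).add_const 1
  rw [zero_add] at hlim
  refine hlim.congr' ?_
  filter_upwards [self_mem_nhdsWithin] with x hx
  have : ℓ (x - x₀) ≠ 0 := (map_ne_zero_iff ℓ hℓ).2 (sub_ne_zero.2 hx)
  field_simp
  rw [h0]
  ring

theorem exists_continuous_eq_div {X F : Type*} [TopologicalSpace X] [T1Space X]
    [NormedField F] {f g : X → F} {x₀ : X} {m : F}
    (hf : Continuous f) (hg : Continuous g) (hg0 : ∀ x, x ≠ x₀ → g x ≠ 0)
    (hlim : Tendsto (fun x => f x / g x) (𝓝[≠] x₀) (𝓝 m)) :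
    ∃ N : X → F, Continuous N ∧ N x₀ = m ∧ ∀ x, x ≠ x₀ → N x = f x / g x := by
  classical
  refine ⟨Function.update (fun x => f x / g x) x₀ m, continuous_iff_continuousAt.2 fun x => ?_,
    Function.update_self .., fun x hx => Function.update_of_ne hx ..⟩
  by_cases hx : x = x₀
  · rwa [hx, continuousAt_update_same]
  · rw [continuousAt_update_of_ne hx]
    exact hf.continuousAt.div hg.continuousAt (hg0 x hx)

theorem one_add_mul_mem_slitPlane {w : ℂ} (hw : w.im ≠ 0) (y : ℝ) :
    1 + w * y ∈ Complex.slitPlane := by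
  rw [Complex.mem_slitPlane_iff]
  by_cases hy : y = 0
  · simp [hy]
  · simp [hy, hw]

theorem im_mul_arg_sub_pos {w : ℂ} (hw : w.im ≠ 0) :
    0 < w.im * ((1 + w).arg - (1 + -w).arg) := by
  rcases lt_or_gt_of_ne hw with hneg | hpos
  · have h1 : (1 + w).arg < 0 := Complex.arg_neg_iff.2 (by simpa using hneg)
    have h2 : 0 ≤ (1 + -w).arg := Complex.arg_nonneg_iff.2 (by simpa using hneg.le)
    exact mul_pos_of_neg_of_neg hneg (by linarith)
  · have h1 : 0 ≤ (1 + w).arg := Complex.arg_nonneg_iff.2 (by simpa using hpos.le)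
    have h2 : (1 + -w).arg < 0 := Complex.arg_neg_iff.2 (by simpa using hpos)
    exact mul_pos hpos (by linarith)

theorem im_mul_im_increment_pos {w : ℂ} (hw : w.im ≠ 0) {F G : ℝ → ℂ}
    (hF : ContinuousOn F (Icc (-1) 1)) (hG : ContinuousOn G (Icc (-1) 1))
    (h : ∀ y ∈ Icc (-1 : ℝ) 1,
      Complex.exp (F y) * (w * y - 1) = Complex.exp (G y) * (w * y + 1)) :
    0 < w.im * (F 1 - G 1 - (F (-1) - G (-1))).im := by
  have hslit := one_add_mul_mem_slitPlane hw
  have hslit' := one_add_mul_mem_slitPlane (w := -w) (by simpa using hw)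
  have hexp : ∀ y ∈ Icc (-1 : ℝ) 1, Complex.exp (F y - G y) =
      Complex.exp (Complex.log (1 + w * y) - Complex.log (1 + -w * y) + Real.pi * Complex.I) := by
    intro y hy
    have h1 := Complex.slitPlane_ne_zero (hslit y)
    have h2 := Complex.slitPlane_ne_zero (hslit' y)
    rw [Complex.exp_add, Complex.exp_pi_mul_I, Complex.exp_sub, Complex.exp_sub,
      Complex.exp_log h1, Complex.exp_log h2, div_mul_eq_mul_div,
      div_eq_div_iff (Complex.exp_ne_zero _) h2]
    linear_combination -h y hy
  have hcont : Continuous fun y : ℝ =>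
      Complex.log (1 + w * y) - Complex.log (1 + -w * y) + Real.pi * Complex.I :=
    ((Continuous.clog (by fun_prop) hslit).sub (Continuous.clog (by fun_prop) hslit')).add
      continuous_const
  have hincr := sub_eq_sub_of_exp_eqOn isPreconnected_Icc (hF.sub hG) hcont.continuousOn hexp
    (a := -1) (b := 1) (by simp) (by simp)
  have key := im_mul_arg_sub_pos hw
  simp only [Pi.sub_apply] at hincr
  rw [hincr]
  simp only [Complex.ofReal_one, Complex.ofReal_neg, mul_one, mul_neg, neg_neg, Complex.add_im,
    Complex.sub_im, Complex.log_im]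
  linarith

theorem apply_prod_eq (ℓ : ℝ × ℝ →L[ℝ] ℂ) (x y : ℝ) :
    ℓ (x, y) = x * ℓ (1, 0) + y * ℓ (0, 1) := by
  rw [← Complex.real_smul, ← Complex.real_smul, ← map_smul, ← map_smul, ← map_add]
  simp

theorem im_div_ne_zero_of_injective {ℓ : ℝ × ℝ →L[ℝ] ℂ} (hℓ : Function.Injective ℓ) :
    (ℓ (0, 1) / ℓ (1, 0)).im ≠ 0 := by
  intro h0
  have hP : ℓ (1, 0) ≠ 0 := (map_ne_zero_iff ℓ hℓ).2 (by simp)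
  have hreal : ℓ (0, 1) = ((ℓ (0, 1) / ℓ (1, 0)).re : ℂ) * ℓ (1, 0) := by
    conv_lhs => rw [← div_mul_cancel₀ (ℓ (0, 1)) hP, ← Complex.re_add_im (ℓ (0, 1) / ℓ (1, 0)), h0]
    simp
  have : ((-(ℓ (0, 1) / ℓ (1, 0)).re, 1) : ℝ × ℝ) = 0 := (map_eq_zero_iff ℓ hℓ).1 <| by
    rw [apply_prod_eq]
    push_cast
    linear_combination hreal
  simp at this

/- Along either pair of opposite edges the argument of `ℓ` turns by a definite sign, and the two
signs are opposite because `R / P` and `P / R` have imaginary parts of opposite signs; but both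
computations evaluate the same alternating sum of `L` over the corners. -/
theorem not_exists_log_of_mul_linear_periodic {ℓ : ℝ × ℝ →L[ℝ] ℂ} (hℓ : Function.Injective ℓ)
    {L : ℝ × ℝ → ℂ} (hL : ContinuousOn L (Icc (-1) 1 ×ˢ Icc (-1) 1))
    (hfst : ∀ y ∈ Icc (-1 : ℝ) 1,
      Complex.exp (L (-1, y)) * ℓ (-1, y) = Complex.exp (L (1, y)) * ℓ (1, y))
    (hsnd : ∀ x ∈ Icc (-1 : ℝ) 1,
      Complex.exp (L (x, -1)) * ℓ (x, -1) = Complex.exp (L (x, 1)) * ℓ (x, 1)) : False := by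
  set P := ℓ (1, 0) with hP
  set R := ℓ (0, 1) with hR
  have hP0 : P ≠ 0 := (map_ne_zero_iff ℓ hℓ).2 (by simp)
  have hR0 : R ≠ 0 := (map_ne_zero_iff ℓ hℓ).2 (by simp)
  have hw : (R / P).im ≠ 0 := im_div_ne_zero_of_injective hℓ
  have hinv : (P / R).im = -(R / P).im / Complex.normSq (R / P) := by
    rw [← Complex.inv_im, inv_div]
  have hnorm : 0 < Complex.normSq (R / P) := Complex.normSq_pos.2 (div_ne_zero hR0 hP0)
  have hw' : (P / R).im ≠ 0 := hinv ▸ div_ne_zero (neg_ne_zero.2 hw) hnorm.ne'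
  have hleft : ∀ x ∈ Icc (-1 : ℝ) 1, ContinuousOn (fun y => L (x, y)) (Icc (-1) 1) :=
    fun x hx => hL.comp (by fun_prop) fun y hy => ⟨hx, hy⟩
  have hright : ∀ y ∈ Icc (-1 : ℝ) 1, ContinuousOn (fun x => L (x, y)) (Icc (-1) 1) :=
    fun y hy => hL.comp (by fun_prop) fun x hx => ⟨hx, hy⟩
  have h1 := im_mul_im_increment_pos hw (hleft (-1) (by simp)) (hleft 1 (by simp)) fun y hy => by
    have := hfst y hy
    rw [apply_prod_eq ℓ (-1) y, apply_prod_eq ℓ 1 y, ← hP, ← hR] at this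
    push_cast at this
    field_simp
    linear_combination this
  have h2 := im_mul_im_increment_pos hw' (hright (-1) (by simp)) (hright 1 (by simp)) fun x hx => by
    have := hsnd x hx
    rw [apply_prod_eq ℓ x (-1), apply_prod_eq ℓ x 1, ← hP, ← hR] at this
    push_cast at this
    field_simp
    linear_combination this
  rw [hinv, show L (1, -1) - L (1, 1) - (L (-1, -1) - L (-1, 1)) =
    L (-1, 1) - L (1, 1) - (L (-1, -1) - L (1, -1)) by ring, div_mul_eq_mul_div, neg_mul,
    neg_div, neg_pos] at h2
  exact lt_asymm (div_pos h1 hnorm) h2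

theorem eq_zero_of_half_period_smul_eq {l : ℝ} (hl : 0 < l) {t : ℝ} (ht : t ∈ Icc (-1 : ℝ) 1)
    {n : ℤ} (h : l / 2 * t = n * l) : t = 0 := by
  have ht2 : t = 2 * n := by field_simp at h; linarith
  have h1 : (-1 : ℤ) < n := by exact_mod_cast (by linarith [ht.1] : (-1 : ℝ) < n)
  have h2 : n < (1 : ℤ) := by exact_mod_cast (by linarith [ht.2] : (n : ℝ) < 1)
  obtain rfl : n = 0 := by omega
  simpa using ht2

theorem not_exists_unique_nondegenerate_zero_of_doublyPeriodic {l : ℝ} (hl : 0 < l)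
    {k : ℝ × ℝ → ℂ} (hk : Continuous k) (hfst : ∀ x, k (x.1 + l, x.2) = k x)
    (hsnd : ∀ x, k (x.1, x.2 + l) = k x) {x₀ : ℝ × ℝ}
    (hzero : ∀ x, k x = 0 → ∃ m n : ℤ, x = x₀ + (m * l, n * l))
    {ℓ : ℝ × ℝ →L[ℝ] ℂ} (hℓ : Function.Injective ℓ) {m : ℂ} (hm : m ≠ 0)
    (hlim : Tendsto (fun x => k x / ℓ (x - x₀)) (𝓝[≠] x₀) (𝓝 m)) : False := by
  have hℓ0 : ∀ y, y ≠ 0 → ℓ y ≠ 0 := fun y => (map_ne_zero_iff ℓ hℓ).2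
  obtain ⟨N, hN, hN₀, hN_eq⟩ := exists_continuous_eq_div hk (g := fun x => ℓ (x - x₀))
    (by fun_prop) (fun x hx => hℓ0 _ (sub_ne_zero.2 hx)) hlim
  have hshift : ∀ y : ℝ × ℝ, y ≠ 0 → x₀ + (l / 2) • y ≠ x₀ := fun y hy => by
    simpa [hl.ne'] using hy
  have hN_mul : ∀ y : ℝ × ℝ, y ≠ 0 →
      N (x₀ + (l / 2) • y) * ℓ y = (2 / l) * k (x₀ + (l / 2) • y) := by
    intro y hy
    have hl0 : (l : ℂ) ≠ 0 := by exact_mod_cast hl.ne'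
    have := hℓ0 y hy
    rw [hN_eq _ (hshift y hy), add_sub_cancel_left, map_smul, Complex.real_smul]
    push_cast
    field_simp
  obtain ⟨L, hL, hexp⟩ := exists_continuousOn_log_of_convex (K := Icc (-1 : ℝ) 1 ×ˢ Icc (-1 : ℝ) 1)
    ((convex_Icc _ _).prod (convex_Icc _ _)) (f := fun y => N (x₀ + (l / 2) • y))
    (by fun_prop) (by
      intro y hy
      by_cases hy0 : y = 0
      · simpa [hy0, hN₀] using hm
      rw [hN_eq _ (hshift y hy0)]
      refine div_ne_zero (fun h0 => hy0 ?_) (hℓ0 _ (sub_ne_zero.2 (hshift y hy0)))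
      obtain ⟨i, j, hij⟩ := hzero _ h0
      have hij := Prod.ext_iff.1 (add_left_cancel hij)
      exact Prod.ext (eq_zero_of_half_period_smul_eq hl hy.1 hij.1)
        (eq_zero_of_half_period_smul_eq hl hy.2 hij.2))
  refine not_exists_log_of_mul_linear_periodic hℓ hL (fun y hy => ?_) fun x hx => ?_
  · rw [hexp _ ⟨by simp, hy⟩, hexp _ ⟨by simp, hy⟩, hN_mul _ (by simp), hN_mul _ (by simp), ← hfst]
    congr 2
    ext <;> [simp; simp]
    ring
  · rw [hexp _ ⟨hx, by simp⟩, hexp _ ⟨hx, by simp⟩, hN_mul _ (by simp), hN_mul _ (by simp), ← hsnd]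
    congr 2
    ext <;> [simp; simp]
    ring

/-! ### The corner of a shell -/

theorem convex_triangle (a b : ℝ) : Convex ℝ {x : ℝ × ℝ | a ≤ x.1 ∧ x.1 ≤ x.2 ∧ x.2 ≤ b} := by
  intro x hx y hy s t hs ht hst
  exact ⟨convex_Ici a hx.1 hy.1 hs ht hst,
    add_le_add (mul_le_mul_of_nonneg_left hx.2.1 hs) (mul_le_mul_of_nonneg_left hy.2.1 ht),
    convex_Iic b hx.2.2 hy.2.2 hs ht hst⟩

/- For a continuous logarithm `L` of `N`, the increment of `L` along `{a} × [a, b]` equals its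
increment along `[a, b] × {b}`, so each is half the increment along the diagonal, where `N` stays
in the right half plane. -/
theorem re_pos_of_edge_eq_mul_edge {a b : ℝ} (hab : a ≤ b) {N : ℝ × ℝ → ℂ}
    (hN : ContinuousOn N {x | a ≤ x.1 ∧ x.1 ≤ x.2 ∧ x.2 ≤ b})
    (h0 : ∀ s u, a ≤ s → s ≤ u → u ≤ b → N (s, u) ≠ 0) {ρ : ℂ}
    (hedge : ∀ s ∈ Icc a b, N (s, b) = ρ * N (a, s))
    (hdiag : ∀ s ∈ Icc a b, 0 < (N (s, s)).re) : 0 < ρ.re := by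
  set K : Set (ℝ × ℝ) := {x | a ≤ x.1 ∧ x.1 ≤ x.2 ∧ x.2 ≤ b}
  obtain ⟨L, hL, hexp⟩ := exists_continuousOn_log_of_convex (convex_triangle a b) hN
    fun x hx => h0 x.1 x.2 hx.1 hx.2.1 hx.2.2
  have haK : ∀ s ∈ Icc a b, (a, s) ∈ K := fun s hs => ⟨le_rfl, hs.1, hs.2⟩
  have hbK : ∀ s ∈ Icc a b, (s, b) ∈ K := fun s hs => ⟨hs.1, hs.2, le_rfl⟩
  have hsK : ∀ s ∈ Icc a b, (s, s) ∈ K := fun s hs => ⟨hs.1, le_rfl, hs.2⟩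
  have ha : a ∈ Icc a b := left_mem_Icc.2 hab
  have hb : b ∈ Icc a b := right_mem_Icc.2 hab
  have hρ : Complex.exp (L (a, b) - L (a, a)) = ρ := by
    rw [Complex.exp_sub, hexp _ (haK b hb), hexp _ (haK a ha), hedge a ha]
    exact mul_div_cancel_right₀ _ (h0 a a le_rfl le_rfl hab)
  have hedges : L (b, b) - L (a, b) = L (a, b) - L (a, a) := by
    have := sub_eq_sub_of_exp_eqOn isPreconnected_Icc (f := fun s => L (s, b))
      (g := fun s => L (a, s) + (L (a, b) - L (a, a))) (hL.comp (by fun_prop) hbK)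
      ((hL.comp (f := fun s => (a, s)) (by fun_prop) haK).add continuousOn_const)
      (fun s hs => by
        rw [Complex.exp_add, hρ, hexp _ (haK s hs), hexp _ (hbK s hs), hedge s hs, mul_comm]) ha hb
    linear_combination this
  have hdiagonal : L (b, b) - L (a, a) = Complex.log (N (b, b)) - Complex.log (N (a, a)) :=
    sub_eq_sub_of_exp_eqOn isPreconnected_Icc (f := fun s => L (s, s))
      (g := fun s => Complex.log (N (s, s))) (hL.comp (by fun_prop) hsK)
      (ContinuousOn.clog (hN.comp (by fun_prop) hsK) fun s hs => Or.inl (hdiag s hs))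
      (fun s hs => by
        rw [hexp _ (hsK s hs), Complex.exp_log (h0 s s hs.1 le_rfl hs.2)]) ha hb
  have him : (L (a, b) - L (a, a)).im = ((N (b, b)).arg - (N (a, a)).arg) / 2 := by
    have h1 := congrArg Complex.im hedges
    have h2 := congrArg Complex.im hdiagonal
    simp only [Complex.sub_im, Complex.log_im] at h1 h2 ⊢
    linarith
  have harg := fun s hs => abs_lt.1 (Complex.abs_arg_lt_pi_div_two_iff.2 (Or.inl (hdiag s hs)))
  rw [← hρ, Complex.exp_re, him]
  exact mul_pos (Real.exp_pos _) (Real.cos_pos_of_mem_Ioo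
    ⟨by linarith [(harg a ha).2, (harg b hb).1], by linarith [(harg a ha).1, (harg b hb).2]⟩)

theorem exists_continuous_slope {E : Type*} [NormedAddCommGroup E] [NormedSpace ℝ E]
    [CompleteSpace E] {f : ℝ → E} (hf : ContDiff ℝ 1 f) :
    ∃ D : ℝ × ℝ → E, Continuous D ∧ (∀ s, D (s, s) = deriv f s) ∧
      ∀ s u, f u - f s = (u - s) • D (s, u) := by
  have : Continuous (deriv f) := hf.continuous_deriv le_rfl
  refine ⟨fun x => ∫ t in (0 : ℝ)..1, deriv f (x.1 + t * (x.2 - x.1)), ?_, by simp, fun s u => ?_⟩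
  · refine intervalIntegral.continuous_parametric_intervalIntegral_of_continuous' ?_ _ _
    simp only [Function.uncurry_def]
    fun_prop
  · have hderiv : ∀ t : ℝ, HasDerivAt (fun t : ℝ => f (s + t * (u - s)))
        ((u - s) • deriv f (s + t * (u - s))) t := fun t => by
      have hline : HasDerivAt (fun t : ℝ => s + t * (u - s)) (u - s) t := by
        simpa using ((hasDerivAt_id t).mul_const (u - s)).const_add s
      exact (hf.differentiable one_ne_zero _).hasDerivAt.scomp t hline
    have := intervalIntegral.integral_eq_sub_of_hasDerivAt (a := 0) (b := 1)
      (fun t _ => hderiv t) (Continuous.intervalIntegrable (by fun_prop) _ _)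
    rw [intervalIntegral.integral_smul] at this
    simpa using this.symm

/-- The standard Hermitian form on `ℂ²`, conjugate-linear in the first variable. -/
def herm (x y : ℂ × ℂ) : ℂ := conj x.1 * y.1 + conj x.2 * y.2

/-- The complex area form on `ℂ²`. -/
def area (x y : ℂ × ℂ) : ℂ := x.1 * y.2 - x.2 * y.1

/-- The first column of `A⁻¹ * B`, for `A`, `B` in `SU(2)` with first columns `x` and `y`. An
element of `SU(2)` is determined by its first column, so that `SU(2)` is the unit sphere of `ℂ²`. -/
def relColumn (x y : ℂ × ℂ) : ℂ × ℂ := (herm x y, area x y)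

theorem herm_swap (x y : ℂ × ℂ) : herm y x = conj (herm x y) := by
  simp only [herm, map_add, map_mul, Complex.conj_conj]
  ring

theorem area_swap (x y : ℂ × ℂ) : area y x = -area x y := by
  simp only [area]
  ring

theorem area_self (x : ℂ × ℂ) : area x x = 0 := by
  simp only [area]
  ring

theorem area_smul_left (c : ℂ) (x y : ℂ × ℂ) : area (c • x) y = c * area x y := by
  simp only [area, Prod.smul_fst, Prod.smul_snd, smul_eq_mul]
  ring

theorem area_smul_right (c : ℂ) (x y : ℂ × ℂ) : area x (c • y) = c * area x y := by
  simp only [area, Prod.smul_fst, Prod.smul_snd, smul_eq_mul]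
  ring

theorem area_sub_right (x y z : ℂ × ℂ) : area x (y - z) = area x y - area x z := by
  simp only [area, Prod.fst_sub, Prod.snd_sub]
  ring

theorem continuous_area_comp {X : Type*} [TopologicalSpace X] {f g : X → ℂ × ℂ} (hf : Continuous f)
    (hg : Continuous g) : Continuous fun x => area (f x) (g x) := by
  unfold area
  fun_prop

theorem herm_relColumn {x y : ℂ × ℂ} (hx : herm x x = 1) (hy : herm y y = 1) :
    herm (relColumn x y) (relColumn x y) = 1 := by
  simp only [herm, relColumn, area, map_add, map_sub, map_mul, Complex.conj_conj] at *
  linear_combination (conj y.1 * y.1 + conj y.2 * y.2) * hx + hy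

theorem eq_herm_smul_of_area_eq_zero {x y : ℂ × ℂ} (hx : herm x x = 1) (h : area x y = 0) :
    y = herm x y • x := by
  simp only [herm, area] at hx h
  ext1 <;> simp only [herm, Prod.smul_fst, Prod.smul_snd, smul_eq_mul]
  · linear_combination (-y.1) * hx - conj x.2 * h
  · linear_combination (-y.2) * hx + conj x.1 * h

/-- `ψ` is the first column of a `C¹` curve in `SU(2)` lifting a spherical curve of speed `2 * v`:
a curve in the unit sphere of `ℂ²` with `area ψ ψ' = v > 0`. -/
structure IsSpinorCurve (ψ : ℝ → ℂ × ℂ) (v : ℝ → ℝ) : Prop where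
  contDiff : ContDiff ℝ 1 ψ
  unit : ∀ s, herm (ψ s) (ψ s) = 1
  area_deriv : ∀ s, area (ψ s) (deriv ψ s) = v s
  pos : ∀ s, 0 < v s

/-- The differential of `(s, u) ↦ area (ψ s) (ψ u)` at a zero, for a spinor curve `ψ` with speeds
`v` and `w` at the two parameters and `α = herm (ψ s) (ψ u)`. -/
def crossingDeriv (v w : ℝ) (α : ℂ) : ℝ × ℝ →L[ℝ] ℂ :=
  (ContinuousLinearMap.toSpanSingleton ℝ (-(v * α))).coprod
    (ContinuousLinearMap.toSpanSingleton ℝ (w * conj α))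

theorem crossingDeriv_apply (v w : ℝ) (α : ℂ) (x : ℝ × ℝ) :
    crossingDeriv v w α x = w * conj α * x.2 - v * α * x.1 := by
  simp only [crossingDeriv, ContinuousLinearMap.coprod_apply,
    ContinuousLinearMap.toSpanSingleton_apply, Complex.real_smul]
  ring

theorem crossingDeriv_injective {v w : ℝ} (hv : 0 < v) (hw : 0 < w) {α : ℂ}
    (hα : (α ^ 2).im ≠ 0) : Function.Injective (crossingDeriv v w α) := by
  rw [injective_iff_map_eq_zero]
  intro x hx
  rw [crossingDeriv_apply] at hx
  have h1 := congrArg Complex.re hx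
  have h2 := congrArg Complex.im hx
  simp only [Complex.sub_re, Complex.sub_im, Complex.mul_re, Complex.mul_im, Complex.ofReal_re,
    Complex.ofReal_im, Complex.conj_re, Complex.conj_im, Complex.zero_re, Complex.zero_im, sq]
    at h1 h2 hα
  have hx1 : (v * (α.re * α.im + α.im * α.re)) * x.1 = 0 := by
    linear_combination -α.im * h1 - α.re * h2
  have hx2 : (w * (α.re * α.im + α.im * α.re)) * x.2 = 0 := by
    linear_combination α.im * h1 - α.re * h2
  exact Prod.ext ((mul_eq_zero.1 hx1).resolve_left (mul_ne_zero hv.ne' hα))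
    ((mul_eq_zero.1 hx2).resolve_left (mul_ne_zero hw.ne' hα))

namespace IsSpinorCurve

variable {ψ : ℝ → ℂ × ℂ} {v : ℝ → ℝ}

theorem hasFDerivAt_area (h : IsSpinorCurve ψ v) {a b : ℝ} (h0 : area (ψ a) (ψ b) = 0) :
    HasFDerivAt (fun x : ℝ × ℝ => area (ψ x.1) (ψ x.2))
      (crossingDeriv (v a) (v b) (herm (ψ a) (ψ b))) (a, b) := by
  have hψ : ∀ s, HasDerivAt ψ (deriv ψ s) s := fun s =>
    (h.contDiff.differentiable one_ne_zero s).hasDerivAt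
  have hda := (hψ a).hasFDerivAt.comp (a, b) (hasFDerivAt_fst (𝕜 := ℝ) (E := ℝ) (F := ℝ))
  have hdb := (hψ b).hasFDerivAt.comp (a, b) (hasFDerivAt_snd (𝕜 := ℝ) (E := ℝ) (F := ℝ))
  have hba : area (ψ b) (deriv ψ a) = herm (ψ a) (ψ b) * v a := by
    conv_lhs => rw [eq_herm_smul_of_area_eq_zero (h.unit a) h0]
    rw [area_smul_left, h.area_deriv]
  have hab : area (ψ a) (deriv ψ b) = conj (herm (ψ a) (ψ b)) * v b := by
    conv_lhs =>
      rw [eq_herm_smul_of_area_eq_zero (h.unit b) (by rw [area_swap, h0, neg_zero] :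
        area (ψ b) (ψ a) = 0)]
    rw [area_smul_left, h.area_deriv, herm_swap]
  refine ((hda.fst.mul hdb.snd).sub (hda.snd.mul hdb.fst)).congr_fderiv
    (ContinuousLinearMap.ext fun x => ?_)
  rw [crossingDeriv_apply]
  simp only [area] at hab hba
  simp only [Function.comp_apply, _root_.sub_apply, _root_.add_apply, _root_.smul_apply,
    ContinuousLinearMap.comp_apply, ContinuousLinearMap.coe_fst', ContinuousLinearMap.coe_snd',
    smul_eq_mul, ContinuousLinearMap.toSpanSingleton_apply, Prod.smul_fst, Prod.smul_snd,
    Complex.real_smul]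
  linear_combination x.2 * hab - x.1 * hba

theorem exists_continuous_area_quotient (h : IsSpinorCurve ψ v) :
    ∃ Q : ℝ × ℝ → ℂ, Continuous Q ∧ (∀ s, Q (s, s) = v s) ∧
      ∀ s u, area (ψ s) (ψ u) = (u - s) * Q (s, u) := by
  obtain ⟨D, hD, hD_self, hD_slope⟩ := exists_continuous_slope h.contDiff
  refine ⟨fun x => area (ψ x.1) (D x), ?_, fun s => ?_, fun s u => ?_⟩
  · exact continuous_area_comp (h.contDiff.continuous.comp continuous_fst) hD
  · simp only [hD_self, h.area_deriv]
  · have := congrArg (area (ψ s)) (hD_slope s u)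
    rw [area_sub_right, area_self, sub_zero] at this
    rw [this, ← area_smul_right]
    norm_cast

end IsSpinorCurve

/-- The restriction of `ψ` to `[a, b]` covers a simple spherical loop with a transversal corner,
the spherical points below `x` and `y` being equal exactly when `area x y = 0`. -/
structure IsSpinorShell (ψ : ℝ → ℂ × ℂ) (a b : ℝ) : Prop where
  lt : a < b
  area_eq_zero : area (ψ a) (ψ b) = 0
  eq_endpoints : ∀ {s u}, a ≤ s → s < u → u ≤ b → area (ψ s) (ψ u) = 0 → s = a ∧ u = b
  transversal : (herm (ψ a) (ψ b) ^ 2).im ≠ 0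

/-- `N` is the function `-area (ψ s) (ψ u)` with its zeros divided out: by `u - s` along the
diagonal and by the differential of `area (ψ s) (ψ u)` at the double point `(a, b)`. -/
structure IsShellQuotient (ψ : ℝ → ℂ × ℂ) (v : ℝ → ℝ) (a b : ℝ) (N : ℝ × ℝ → ℂ) : Prop where
  continuous : Continuous N
  corner_ne_zero : N (a, b) ≠ 0
  mul_eq : ∀ x, x ≠ (a, b) →
    N x * ((x.2 - x.1) * crossingDeriv (v a) (v b) (herm (ψ a) (ψ b)) (x - (a, b))) =
      -area (ψ x.1) (ψ x.2)
  diag_mul : ∀ s,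
    N (s, s) * crossingDeriv (v a) (v b) (herm (ψ a) (ψ b)) ((s, s) - (a, b)) = -v s

namespace IsSpinorCurve

variable {ψ : ℝ → ℂ × ℂ} {v : ℝ → ℝ} {a b : ℝ} {N : ℝ × ℝ → ℂ}

theorem exists_isShellQuotient (h : IsSpinorCurve ψ v) (hs : IsSpinorShell ψ a b) :
    ∃ N, IsShellQuotient ψ v a b N := by
  obtain ⟨Q, hQ, hQ_self, hQ_mul⟩ := h.exists_continuous_area_quotient
  have hdiff := h.hasFDerivAt_area hs.area_eq_zero
  set ℓ := crossingDeriv (v a) (v b) (herm (ψ a) (ψ b))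
  have hℓ : Function.Injective ℓ := crossingDeriv_injective (h.pos a) (h.pos b) hs.transversal
  have hℓ0 : ∀ x, x ≠ (a, b) → ℓ (x - (a, b)) ≠ 0 := fun x hx =>
    (map_ne_zero_iff ℓ hℓ).2 (sub_ne_zero.2 hx)
  have hba : (b : ℂ) - a ≠ 0 := sub_ne_zero.2 (by exact_mod_cast hs.lt.ne')
  have hlim : Tendsto (fun x => -Q x / ℓ (x - (a, b))) (𝓝[≠] (a, b)) (𝓝 (-1 / (b - a))) := by
    have hsub : Tendsto (fun x : ℝ × ℝ => -((x.2 : ℂ) - x.1)) (𝓝[≠] (a, b)) (𝓝 (-(b - a))) :=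
      (Continuous.tendsto (f := fun x : ℝ × ℝ => -((x.2 : ℂ) - x.1)) (by fun_prop) _).mono_left
        nhdsWithin_le_nhds
    have := (tendsto_div_of_hasFDerivAt hdiff hℓ hs.area_eq_zero).div hsub (neg_ne_zero.2 hba)
    rw [div_neg, ← neg_div] at this
    refine this.congr' ?_
    filter_upwards [hsub.eventually_ne (neg_ne_zero.2 hba)] with x hx
    simp only [Pi.div_apply, hQ_mul]
    rw [neg_ne_zero] at hx
    field_simp
  obtain ⟨N, hN, hN_ab, hN_eq⟩ := exists_continuous_eq_div hQ.neg (g := fun x => ℓ (x - (a, b)))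
    (by fun_prop) hℓ0 hlim
  refine ⟨N, hN, hN_ab ▸ div_ne_zero (neg_ne_zero.2 one_ne_zero) hba, fun x hx => ?_, fun s => ?_⟩
  · have := hℓ0 x hx
    change N x * ((x.2 - x.1) * ℓ (x - (a, b))) = _
    rw [hN_eq x hx, hQ_mul]
    simp only [Pi.neg_apply]
    field_simp
  · have hx : (s, s) ≠ (a, b) := fun e => hs.lt.ne <|
      (congrArg Prod.fst e).symm.trans (congrArg Prod.snd e)
    rw [hN_eq _ hx, Pi.neg_apply, hQ_self, div_mul_cancel₀ _ (hℓ0 _ hx)]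

theorem shell_quotient_edge (h : IsSpinorCurve ψ v) (hs : IsSpinorShell ψ a b)
    (hN : IsShellQuotient ψ v a b N) {s : ℝ} (hs' : s ∈ Icc a b) :
    N (s, b) = -(v b / v a * conj (herm (ψ a) (ψ b))) * N (a, s) := by
  rw [← closure_Ioo hs.lt.ne] at hs'
  have hN_cont := hN.continuous
  refine EqOn.closure (s := Ioo a b) (f := fun s => N (s, b))
    (g := fun s => -(v b / v a * conj (herm (ψ a) (ψ b))) * N (a, s)) (fun s hs' => ?_)
    (by fun_prop) (by fun_prop) hs'
  have hsa : ((s : ℂ) - a) ≠ 0 := sub_ne_zero.2 (by exact_mod_cast hs'.1.ne')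
  have hbs : ((b : ℂ) - s) ≠ 0 := sub_ne_zero.2 (by exact_mod_cast hs'.2.ne')
  have hva : (v a : ℂ) ≠ 0 := by exact_mod_cast (h.pos a).ne'
  have hα : herm (ψ a) (ψ b) ≠ 0 := fun e => hs.transversal (by rw [e]; simp)
  have hsb := hN.mul_eq (s, b) fun e => hs'.1.ne' (congrArg Prod.fst e)
  have has := hN.mul_eq (a, s) fun e => hs'.2.ne (congrArg Prod.snd e)
  have harea : area (ψ s) (ψ b) = -(herm (ψ a) (ψ b) * area (ψ a) (ψ s)) := by
    conv_lhs => rw [eq_herm_smul_of_area_eq_zero (h.unit a) hs.area_eq_zero]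
    rw [area_swap, area_smul_left]
  simp only [crossingDeriv_apply, Prod.fst_sub, Prod.snd_sub, harea, Complex.ofReal_sub, sub_self,
    Complex.ofReal_zero, mul_zero, zero_sub, sub_zero] at hsb has
  have hne := mul_ne_zero (mul_ne_zero hα hsa) hbs
  field_simp
  refine mul_left_cancel₀ hne ?_
  linear_combination -hsb - herm (ψ a) (ψ b) * has

theorem shell_quotient_ne_zero (h : IsSpinorCurve ψ v) (hs : IsSpinorShell ψ a b)
    (hN : IsShellQuotient ψ v a b N) {s u : ℝ} (has : a ≤ s) (hsu : s ≤ u)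
    (hub : u ≤ b) : N (s, u) ≠ 0 := by
  intro h0
  rcases hsu.eq_or_lt with rfl | hsu
  · have := hN.diag_mul s
    rw [h0, zero_mul, eq_comm, neg_eq_zero, Complex.ofReal_eq_zero] at this
    exact (h.pos s).ne' this
  · by_cases hx : (s, u) = (a, b)
    · exact hN.corner_ne_zero (hx ▸ h0)
    · have := hN.mul_eq _ hx
      rw [h0, zero_mul, eq_comm, neg_eq_zero] at this
      obtain ⟨rfl, rfl⟩ := hs.eq_endpoints has hsu hub this
      exact hx rfl

theorem shell_quotient_diag_re_pos (h : IsSpinorCurve ψ v) (hs : IsSpinorShell ψ a b)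
    (hN : IsShellQuotient ψ v a b N) (hα : 0 < (herm (ψ a) (ψ b)).re) {s : ℝ} (hs' : s ∈ Icc a b) :
    0 < (N (s, s)).re := by
  have hself := hN.diag_mul s
  rw [crossingDeriv_apply] at hself
  set d : ℂ := v a * herm (ψ a) (ψ b) * (s - a : ℝ) + v b * conj (herm (ψ a) (ψ b)) * (b - s : ℝ)
  have hd : 0 < d.re := by
    have hd_re : d.re = (herm (ψ a) (ψ b)).re * (v a * (s - a) + v b * (b - s)) := by
      simp only [d, Complex.add_re, Complex.re_mul_ofReal, Complex.re_ofReal_mul,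
        Complex.conj_re]
      ring
    have ha := h.pos a
    have hb := h.pos b
    have hab := hs.lt
    rw [hd_re]
    exact mul_pos hα (by rcases hs'.1.eq_or_lt with rfl | hlt <;> nlinarith [hs'.1, hs'.2])
  have hd0 : d ≠ 0 := fun e => hd.ne' (by rw [e, Complex.zero_re])
  have : N (s, s) = v s * d⁻¹ := by
    rw [eq_mul_inv_iff_mul_eq₀ hd0]
    simp only [d, Prod.fst_sub, Prod.snd_sub, Complex.ofReal_sub] at hself ⊢
    linear_combination -hself
  rw [this, Complex.re_ofReal_mul, Complex.inv_re]
  exact mul_pos (h.pos s) (div_pos hd (Complex.normSq_pos.2 hd0))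

/- This is Hopf's Umlaufsatz for a loop with one corner: `N` interpolates between the tangent
direction on the diagonal and the two families of secants through the corner. -/
theorem re_herm_neg_of_shell (h : IsSpinorCurve ψ v) (hs : IsSpinorShell ψ a b) :
    (herm (ψ a) (ψ b)).re < 0 := by
  obtain ⟨N, hN⟩ := h.exists_isShellQuotient hs
  by_contra! hα
  replace hα : 0 < (herm (ψ a) (ψ b)).re := hα.lt_of_ne' fun e => hs.transversal (by
    simp [sq, Complex.mul_im, e])
  have := re_pos_of_edge_eq_mul_edge hs.lt.le hN.continuous.continuousOn
    (fun s u => h.shell_quotient_ne_zero hs hN)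
    (fun s hs' => h.shell_quotient_edge hs hN hs') fun s => h.shell_quotient_diag_re_pos hs hN hα
  rw [← Complex.ofReal_div, Complex.neg_re, Complex.re_ofReal_mul, Complex.conj_re] at this
  have := mul_pos (div_pos (h.pos b) (h.pos a)) hα
  linarith

end IsSpinorCurve

/-! ### Eigenvector sections of Pauli matrices -/

/-- The Hermitian trace-free matrix `[[z, conj ζ], [ζ, -z]]` with coordinate vector `w = (ζ, z)`,
acting on `ℂ²`. -/
def pauli (w : WithLp 2 (ℂ × ℝ)) (x : ℂ × ℂ) : ℂ × ℂ :=
  (w.snd * x.1 + conj w.fst * x.2, w.fst * x.1 - w.snd * x.2)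

theorem pauli_add (w : WithLp 2 (ℂ × ℝ)) (x y : ℂ × ℂ) :
    pauli w (x + y) = pauli w x + pauli w y := by
  ext1 <;> simp only [pauli, Prod.fst_add, Prod.snd_add] <;> ring

theorem pauli_smul (w : WithLp 2 (ℂ × ℝ)) (r : ℝ) (x : ℂ × ℂ) :
    pauli w (r • x) = r • pauli w x := by
  ext1 <;> simp only [pauli, Prod.smul_fst, Prod.smul_snd, Complex.real_smul] <;> ring

theorem pauli_pauli_add_pauli_pauli (w w' : WithLp 2 (ℂ × ℝ)) (x : ℂ × ℂ) :
    pauli w (pauli w' x) + pauli w' (pauli w x) = (2 * inner ℝ w w') • x := by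
  have hfst : (inner ℝ w.fst w'.fst : ℂ) * 2 =
      w'.fst * conj w.fst + conj (w'.fst * conj w.fst) := by
    rw [Complex.inner, Complex.add_conj]
    push_cast
    ring
  rw [map_mul, Complex.conj_conj] at hfst
  ext1 <;> simp only [pauli, WithLp.prod_inner_apply, WithLp.ofLp_fst, WithLp.ofLp_snd,
    Real.inner_apply, Prod.fst_add, Prod.snd_add, Prod.smul_fst, Prod.smul_snd,
    Complex.real_smul] <;> push_cast
  · linear_combination (-x.1) * hfst
  · linear_combination (-x.2) * hfst

theorem pauli_pauli (w : WithLp 2 (ℂ × ℝ)) (x : ℂ × ℂ) : pauli w (pauli w x) = ‖w‖ ^ 2 • x := by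
  have h := pauli_pauli_add_pauli_pauli w w x
  rw [← two_smul ℝ, mul_smul, real_inner_self_eq_norm_sq] at h
  exact smul_right_injective _ two_ne_zero h

/-- `ξ` is a nowhere vanishing section of the line bundle of eigenvectors of `pauli w` for the
eigenvalue `‖w‖`. -/
structure IsEigenSection {X : Type*} [TopologicalSpace X] (w : X → WithLp 2 (ℂ × ℝ))
    (ξ : X → ℂ × ℂ) : Prop where
  continuous : Continuous ξ
  ne_zero : ∀ x, ξ x ≠ 0
  pauli_eq : ∀ x, pauli (w x) (ξ x) = ‖w x‖ • ξ x

section EigenSection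

variable {X : Type*} [TopologicalSpace X]

theorem exists_isEigenSection_const (w : WithLp 2 (ℂ × ℝ)) :
    ∃ ξ, IsEigenSection (fun _ : X => w) ξ := by
  rcases eq_or_ne w 0 with rfl | hw
  · refine ⟨fun _ => (1, 0), continuous_const, fun _ => by simp, fun _ => by simp [pauli]⟩
  have hne : ∃ x, ‖w‖ • x + pauli w x ≠ 0 := by
    by_contra! h
    have h1 := congrArg Prod.fst (h (1, 0))
    have h2 := congrArg Prod.snd (h (0, 1))
    simp only [pauli, Prod.fst_add, Prod.snd_add, Prod.smul_fst, Prod.smul_snd, Complex.real_smul,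
      mul_one, mul_zero, add_zero, zero_sub, Prod.fst_zero, Prod.snd_zero] at h1 h2
    have h3 : (2 * ‖w‖ : ℂ) = 0 := by linear_combination h1 + h2
    exact hw (by simpa using h3)
  obtain ⟨x, hx⟩ := hne
  refine ⟨fun _ => ‖w‖ • x + pauli w x, continuous_const, fun _ => hx, fun _ => ?_⟩
  rw [pauli_add, pauli_smul, pauli_pauli]
  module

theorem IsEigenSection.transfer {w w' : X → WithLp 2 (ℂ × ℝ)} {ξ : X → ℂ × ℂ}
    (h : IsEigenSection w ξ) (hw' : Continuous w') (hpos : ∀ x, 0 < inner ℝ (w x) (w' x)) :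
    ∃ ξ', IsEigenSection w' ξ' := by
  have hξ := h.continuous
  refine ⟨fun x => ‖w' x‖ • ξ x + pauli (w' x) (ξ x), ?_, fun x hx => ?_, fun x => ?_⟩
  · unfold pauli
    fun_prop
  · have hw'ξ : pauli (w' x) (ξ x) = (-‖w' x‖) • ξ x := by
      rw [neg_smul]
      exact eq_neg_of_add_eq_zero_right hx
    have hsmul := pauli_pauli_add_pauli_pauli (w x) (w' x) (ξ x)
    rw [hw'ξ, h.pauli_eq, pauli_smul, pauli_smul, h.pauli_eq, hw'ξ, smul_smul, smul_smul,
      ← add_smul] at hsmul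
    have hinner := smul_left_injective ℝ (h.ne_zero x) hsmul
    have hnorm := mul_nonneg (norm_nonneg (w x)) (norm_nonneg (w' x))
    linarith [hpos x]
  · rw [pauli_add, pauli_smul, pauli_pauli]
    module

theorem exists_isEigenSection_of_homotopy [CompactSpace X] {T : Type*} [TopologicalSpace T]
    [PreconnectedSpace T] {w : X × T → WithLp 2 (ℂ × ℝ)} (hw : Continuous w) (h0 : ∀ x, w x ≠ 0)
    {s t : T} (hs : ∃ ξ, IsEigenSection (fun x => w (x, s)) ξ) :
    ∃ ξ, IsEigenSection (fun x => w (x, t)) ξ := by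
  let P (s t : T) : Prop := (∃ ξ, IsEigenSection (fun x => w (x, s)) ξ) →
    ∃ ξ, IsEigenSection (fun x => w (x, t)) ξ
  refine PreconnectedSpace.induction₂' P (fun s => ?_) ⟨fun _ _ _ hst htu h => htu (hst h)⟩ s t hs
  have hpos : ∀ᶠ t in 𝓝 s, ∀ x ∈ (univ : Set X), 0 < inner ℝ (w (x, s)) (w (x, t)) := by
    refine isCompact_univ.eventually_forall_of_forall_eventually fun x _ => ?_
    have hcont : Continuous fun y : T × X => inner ℝ (w (y.2, s)) (w (y.2, y.1)) := by fun_prop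
    exact hcont.continuousAt.eventually (lt_mem_nhds (real_inner_self_pos.2 (h0 _)))
  filter_upwards [hpos] with t ht
  constructor
  · rintro ⟨ξ, hξ⟩
    exact hξ.transfer (by fun_prop) fun x => ht x (mem_univ x)
  · rintro ⟨ξ, hξ⟩
    exact hξ.transfer (by fun_prop) fun x => by
      rw [real_inner_comm]
      exact ht x (mem_univ x)

theorem IsEigenSection.comp {Y : Type*} [TopologicalSpace Y] {w : X → WithLp 2 (ℂ × ℝ)}
    {ξ : X → ℂ × ℂ} (h : IsEigenSection w ξ) {g : Y → X} (hg : Continuous g) :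
    IsEigenSection (w ∘ g) (ξ ∘ g) :=
  ⟨h.continuous.comp hg, fun y => h.ne_zero (g y), fun y => h.pauli_eq (g y)⟩

end EigenSection

/-! ### Stereographic projection -/

/-- Stereographic projection of the unit sphere of `ℂ²` from `(-1, 0)`. -/
def stereo (g : ℂ × ℂ) : WithLp 2 (ℂ × ℝ) :=
  WithLp.toLp 2 (g.2 / (1 + g.1.re : ℝ), g.1.im / (1 + g.1.re))

theorem stereo_fst (g : ℂ × ℂ) : (stereo g).fst = g.2 / (1 + g.1.re : ℝ) := rfl

theorem stereo_snd (g : ℂ × ℂ) : (stereo g).snd = g.1.im / (1 + g.1.re) := rfl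

theorem re_sq_add_im_sq_add_normSq {g : ℂ × ℂ} (hg : herm g g = 1) :
    g.1.re ^ 2 + g.1.im ^ 2 + Complex.normSq g.2 = 1 := by
  have h := congrArg Complex.re hg
  simp only [herm, ← Complex.normSq_eq_conj_mul_self, Complex.add_re, Complex.ofReal_re,
    Complex.one_re, Complex.normSq_apply g.1] at h
  linarith

theorem one_add_re_pos {g : ℂ × ℂ} (hg : herm g g = 1) (h : g ≠ (-1, 0)) : 0 < 1 + g.1.re := by
  have hsq := re_sq_add_im_sq_add_normSq hg
  have h2 := Complex.normSq_nonneg g.2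
  by_contra! hle
  have hre : g.1.re = -1 := by nlinarith [sq_nonneg g.1.im]
  have him : g.1.im = 0 := by nlinarith [sq_nonneg g.1.im]
  have hsnd : g.2 = 0 := Complex.normSq_eq_zero.1 (by nlinarith [sq_nonneg g.1.im])
  exact h (Prod.ext (Complex.ext hre (him.trans (by simp))) hsnd)

theorem one_add_norm_stereo_sq {g : ℂ × ℂ} (hg : herm g g = 1) (h : 0 < 1 + g.1.re) :
    1 + ‖stereo g‖ ^ 2 = 2 / (1 + g.1.re) := by
  have hsq := re_sq_add_im_sq_add_normSq hg
  rw [Complex.normSq_eq_norm_sq] at hsq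
  rw [WithLp.prod_norm_sq_eq_of_L2, stereo_fst, stereo_snd]
  simp only [norm_div, Complex.norm_real, Real.norm_eq_abs, div_pow, sq_abs]
  field_simp
  linear_combination hsq

theorem eq_of_stereo_eq {g h : ℂ × ℂ} (hg : herm g g = 1) (hh : herm h h = 1)
    (hg0 : 0 < 1 + g.1.re) (hh0 : 0 < 1 + h.1.re) (heq : stereo g = stereo h) : g = h := by
  have hre : 1 + g.1.re = 1 + h.1.re := by
    have := one_add_norm_stereo_sq hg hg0
    rw [heq, one_add_norm_stereo_sq hh hh0, div_eq_div_iff hh0.ne' hg0.ne'] at this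
    exact mul_left_cancel₀ two_ne_zero this
  have hne : ((1 + h.1.re : ℝ) : ℂ) ≠ 0 := Complex.ofReal_ne_zero.2 hh0.ne'
  have hfst := congrArg WithLp.fst heq
  have hsnd := congrArg WithLp.snd heq
  simp only [stereo_fst, stereo_snd, hre, div_left_inj' hne, div_left_inj' hh0.ne'] at hfst hsnd
  exact Prod.ext (Complex.ext (add_left_cancel hre) hsnd) hfst

theorem continuous_stereo_comp {X : Type*} [TopologicalSpace X] {g : X → ℂ × ℂ}
    (hg : Continuous g) (h0 : ∀ x, 0 < 1 + (g x).1.re) : Continuous fun x => stereo (g x) := by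
  have hre := Complex.continuous_re.comp hg.fst
  have him := Complex.continuous_im.comp hg.fst
  refine (WithLp.prod_continuous_toLp 2 _ _).comp (Continuous.prodMk ?_ ?_)
  · exact hg.snd.div (Complex.continuous_ofReal.comp (continuous_const.add hre)) fun x =>
      Complex.ofReal_ne_zero.2 (h0 x).ne'
  · exact him.div (continuous_const.add hre) fun x => (h0 x).ne'

theorem exists_mem_Ioc_forall_re_lt {X : Type*} [TopologicalSpace X] [CompactSpace X]
    {g : X → ℂ × ℂ} (hg : Continuous g) (hg0 : ∀ x, 0 < 1 + (g x).1.re)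
    {a b : ℝ} (hab : a < b) {h : ℝ → ℂ × ℂ} (hh : Continuous h) (hha : h a = (-1, 0)) :
    ∃ t ∈ Ioc a b, ∀ x, (h t).1.re < (g x).1.re := by
  have hlt : ∀ᶠ t in 𝓝 a, ∀ x ∈ (univ : Set X), (h t).1.re < (g x).1.re := by
    refine isCompact_univ.eventually_forall_of_forall_eventually fun x _ => ?_
    have hleft : Continuous fun y : ℝ × X => (h y.1).1.re :=
      Complex.continuous_re.comp (by fun_prop)
    have hright : Continuous fun y : ℝ × X => (g y.2).1.re :=
      Complex.continuous_re.comp (by fun_prop)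
    refine hleft.continuousAt.eventually_lt hright.continuousAt ?_
    rw [hha, Complex.neg_re, Complex.one_re]
    linarith [hg0 x]
  obtain ⟨t, hlt, ht⟩ := ((hlt.filter_mono nhdsWithin_le_nhds).and (Ioc_mem_nhdsGT hab)).exists
  exact ⟨t, ht, fun x => hlt x (mem_univ x)⟩

/- Viewed from a point of the path near `(-1, 0)`, that is, stereographically near infinity, the
map `g` is contained in a half space, where the eigen-line bundle is trivial. -/
theorem exists_isEigenSection_stereo_sub {X : Type*} [TopologicalSpace X] [CompactSpace X]
    {g : X → ℂ × ℂ} (hg : Continuous g) (hg_unit : ∀ x, herm (g x) (g x) = 1)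
    {a b : ℝ} (hab : a < b) {h : ℝ → ℂ × ℂ} (hh : Continuous h)
    (hh_unit : ∀ t, herm (h t) (h t) = 1) (hha : h a = (-1, 0)) (hh0 : ∀ t ∈ Ioc a b, h t ≠ (-1, 0))
    (hgh : ∀ x, ∀ t ∈ Icc a b, g x ≠ h t) :
    ∃ ξ, IsEigenSection (fun x => stereo (g x) - stereo (h b)) ξ := by
  have hg_pos : ∀ x, 0 < 1 + (g x).1.re := fun x =>
    one_add_re_pos (hg_unit x) (hha ▸ hgh x a (left_mem_Icc.2 hab.le))
  have hh_pos : ∀ t : Ioc a b, 0 < 1 + (h t).1.re := fun t =>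
    one_add_re_pos (hh_unit t) (hh0 t t.2)
  have hg_cont := continuous_stereo_comp hg hg_pos
  have hh_cont := continuous_stereo_comp (hh.comp continuous_subtype_val) hh_pos
  obtain ⟨t, ht, hlt⟩ := exists_mem_Ioc_forall_re_lt hg hg_pos hab hh hha
  have hnorm : ∀ x, ‖stereo (g x)‖ < ‖stereo (h t)‖ := fun x => by
    refine lt_of_pow_lt_pow_left₀ 2 (norm_nonneg _) ((add_lt_add_iff_left 1).1 ?_)
    rw [one_add_norm_stereo_sq (hg_unit x) (hg_pos x),
      one_add_norm_stereo_sq (hh_unit t) (hh_pos ⟨t, ht⟩)]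
    exact div_lt_div_of_pos_left two_pos (hh_pos ⟨t, ht⟩) ((add_lt_add_iff_left 1).2 (hlt x))
  have hstart : ∃ ξ, IsEigenSection (fun x => stereo (g x) - stereo (h t)) ξ := by
    obtain ⟨ξ, hξ⟩ := exists_isEigenSection_const (X := X) (-stereo (h t))
    refine hξ.transfer (by fun_prop) fun x => ?_
    rw [inner_neg_left, inner_sub_right, real_inner_self_eq_norm_mul_norm]
    have := real_inner_le_norm (stereo (h t)) (stereo (g x))
    nlinarith [hnorm x, norm_nonneg (stereo (g x))]
  have := Subtype.preconnectedSpace (isPreconnected_Ioc (a := a) (b := b))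
  refine exists_isEigenSection_of_homotopy (T := Ioc a b)
    (w := fun x => stereo (g x.1) - stereo (h x.2)) ?_ (fun x hx => ?_)
    (s := ⟨t, ht⟩) (t := ⟨b, right_mem_Ioc.2 hab⟩) hstart
  · exact (hg_cont.comp continuous_fst).sub (hh_cont.comp continuous_snd)
  · exact hgh x.1 x.2 (Ioc_subset_Icc_self x.2.2) (eq_of_stereo_eq (hg_unit _) (hh_unit _)
      (hg_pos _) (hh_pos _) (sub_eq_zero.1 hx))

namespace IsEigenSection

variable {X : Type*} [TopologicalSpace X] {w : X → WithLp 2 (ℂ × ℝ)} {ξ : X → ℂ × ℂ}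

theorem snd_mul (h : IsEigenSection w ξ) (x : X) :
    (ξ x).2 * (‖w x‖ + (w x).snd) = (w x).fst * (ξ x).1 := by
  have := congrArg Prod.snd (h.pauli_eq x)
  simp only [pauli, Prod.smul_snd, Complex.real_smul] at this
  linear_combination -this

theorem fst_ne_zero (h : IsEigenSection w ξ) {x : X} (hx : (ξ x).2 = 0) : (ξ x).1 ≠ 0 :=
  fun hx' => h.ne_zero x (Prod.ext hx' hx)

theorem fst_eq_zero (h : IsEigenSection w ξ) {x : X} (hx : (ξ x).2 = 0) : (w x).fst = 0 := by
  have := h.snd_mul x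
  rw [hx, zero_mul, eq_comm] at this
  exact (mul_eq_zero.1 this).resolve_right (h.fst_ne_zero hx)

theorem snd_nonneg (h : IsEigenSection w ξ) {x : X} (hx : (ξ x).2 = 0) : 0 ≤ (w x).snd := by
  have := congrArg Prod.fst (h.pauli_eq x)
  simp only [pauli, Prod.smul_fst, Complex.real_smul, hx, mul_zero, add_zero] at this
  have hnorm : (w x).snd = ‖w x‖ := by exact_mod_cast mul_right_cancel₀ (h.fst_ne_zero hx) this
  exact hnorm ▸ norm_nonneg _

theorem exists_tendsto_snd_div (h : IsEigenSection w ξ) (hw : Continuous w) {x₀ : X}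
    (hfst : (w x₀).fst = 0) (hsnd : 0 < (w x₀).snd) {ℓ : X → ℂ} {m : ℂ} (hm : m ≠ 0)
    {l : Filter X} (hl : l ≤ 𝓝 x₀) (hlim : Tendsto (fun x => (w x).fst / ℓ x) l (𝓝 m)) :
    ∃ m' ≠ 0, Tendsto (fun x => (ξ x).2 / ℓ x) l (𝓝 m') := by
  have hξ := h.continuous
  have hne : (‖w x₀‖ + (w x₀).snd : ℂ) ≠ 0 := by
    exact_mod_cast (add_pos_of_nonneg_of_pos (norm_nonneg (w x₀)) hsnd).ne'
  have hcont : Continuous fun x => (‖w x‖ + (w x).snd : ℂ) := by fun_prop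
  have hξ₀ : (ξ x₀).1 ≠ 0 := by
    have := h.snd_mul x₀
    rw [hfst, zero_mul] at this
    exact h.fst_ne_zero ((mul_eq_zero.1 this).resolve_right hne)
  refine ⟨m * ((ξ x₀).1 / (‖w x₀‖ + (w x₀).snd)), mul_ne_zero hm (div_ne_zero hξ₀ hne), ?_⟩
  refine (hlim.mul ((hξ.fst.tendsto x₀).div (hcont.tendsto x₀) hne |>.mono_left hl)).congr' ?_
  filter_upwards [hl (hcont.continuousAt.eventually_ne hne)] with x hx
  rw [Pi.div_apply, eq_div_of_mul_eq hx (h.snd_mul x), div_mul_div_comm, div_div, mul_comm (ℓ x)]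

end IsEigenSection

/-! ### A unique crossing and a shell -/

/-- Up to period translations, `(c, d)` and `(d, c)` are the only double points of the spherical
curve below the `l`-periodic curve `ψ`, and the crossing there is transversal. -/
structure IsUniqueCrossing (ψ : ℝ → ℂ × ℂ) (l c d : ℝ) : Prop where
  area_eq_zero : area (ψ c) (ψ d) = 0
  transversal : (herm (ψ c) (ψ d) ^ 2).im ≠ 0
  classify : ∀ {s u}, area (ψ s) (ψ u) = 0 → (∃ n : ℤ, u = s + n * l) ∨
    (∃ m n : ℤ, s = c + m * l ∧ u = d + n * l) ∨ ∃ m n : ℤ, s = d + m * l ∧ u = c + n * l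

namespace IsUniqueCrossing

variable {ψ : ℝ → ℂ × ℂ} {l c d : ℝ}

theorem symm (h : IsUniqueCrossing ψ l c d) : IsUniqueCrossing ψ l d c where
  area_eq_zero := by rw [area_swap, h.area_eq_zero, neg_zero]
  transversal := by
    rw [herm_swap, ← map_pow, Complex.conj_im]
    exact neg_ne_zero.2 h.transversal
  classify h0 := (h.classify h0).imp_right Or.symm

end IsUniqueCrossing

/-- `h` is a path in the unit sphere of `ℂ²` from `(-1, 0)` to `(β, 0)` which does not return to
`(-1, 0)`, where `β` lies in the open first quadrant. -/
structure IsQuadrantPath (h : ℝ → ℂ × ℂ) (a b : ℝ) (β : ℂ) : Prop where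
  lt : a < b
  continuous : Continuous h
  unit : ∀ t, herm (h t) (h t) = 1
  left : h a = (-1, 0)
  ne : ∀ t ∈ Ioc a b, h t ≠ (-1, 0)
  right : h b = (β, 0)
  re_pos : 0 < β.re
  im_pos : 0 < β.im

theorem re_sq_add_im_sq_of_area_eq_zero {x y : ℂ × ℂ} (hx : herm x x = 1) (hy : herm y y = 1)
    (h : area x y = 0) : (herm x y).re ^ 2 + (herm x y).im ^ 2 = 1 := by
  have := re_sq_add_im_sq_add_normSq (herm_relColumn hx hy)
  simpa only [relColumn, h, map_zero, add_zero] using this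

theorem IsQuadrantPath.slope_pos {h : ℝ → ℂ × ℂ} {a b : ℝ} {β : ℂ} (hh : IsQuadrantPath h a b β) :
    0 < β.im / (1 + β.re) :=
  div_pos hh.im_pos (add_pos one_pos hh.re_pos)

theorem IsQuadrantPath.slope_lt_one {h : ℝ → ℂ × ℂ} {a b : ℝ} {β : ℂ}
    (hh : IsQuadrantPath h a b β) : β.im / (1 + β.re) < 1 := by
  have hunit := re_sq_add_im_sq_add_normSq (hh.unit b)
  simp only [hh.right, map_zero, add_zero] at hunit
  rw [div_lt_one (add_pos one_pos hh.re_pos)]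
  nlinarith [hh.re_pos]

theorem exists_periodic_isEigenSection {ψ : ℝ → ℂ × ℂ} (hψ : Continuous ψ)
    (hψ_unit : ∀ s, herm (ψ s) (ψ s) = 1) {l : ℝ} (hl : 0 < l) (hper : Function.Periodic ψ l)
    {h : ℝ → ℂ × ℂ} {a b : ℝ} {β : ℂ} (hh : IsQuadrantPath h a b β)
    (hne : ∀ s u, ∀ t ∈ Icc a b, relColumn (ψ s) (ψ u) ≠ h t) :
    ∃ ξ : ℝ × ℝ → ℂ × ℂ,
      IsEigenSection (fun x => stereo (relColumn (ψ x.1) (ψ x.2)) - stereo (h b)) ξ ∧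
      (∀ x, ξ (x.1 + l, x.2) = ξ x) ∧ ∀ x, ξ (x.1, x.2 + l) = ξ x := by
  have : Fact (0 < l) := ⟨hl⟩
  have hlift : Continuous hper.lift := continuous_quot_lift _ hψ
  obtain ⟨ξ, hξ⟩ := exists_isEigenSection_stereo_sub (X := AddCircle l × AddCircle l)
    (g := fun x => relColumn (hper.lift x.1) (hper.lift x.2))
    (by unfold relColumn herm area; fun_prop)
    (fun ⟨x, y⟩ => by
      obtain ⟨s, rfl⟩ := QuotientAddGroup.mk_surjective x
      obtain ⟨u, rfl⟩ := QuotientAddGroup.mk_surjective y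
      exact herm_relColumn (hψ_unit s) (hψ_unit u))
    hh.lt hh.continuous hh.unit hh.left hh.ne
    (fun ⟨x, y⟩ => by
      obtain ⟨s, rfl⟩ := QuotientAddGroup.mk_surjective x
      obtain ⟨u, rfl⟩ := QuotientAddGroup.mk_surjective y
      exact hne s u)
  have hmk : Continuous fun x : ℝ × ℝ => ((x.1 : AddCircle l), (x.2 : AddCircle l)) :=
    ((AddCircle.continuous_mk' l).comp continuous_fst).prodMk
      ((AddCircle.continuous_mk' l).comp continuous_snd)
  have hcomp := hξ.comp hmk
  simp only [Function.comp_def, Function.Periodic.lift_coe] at hcomp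
  refine ⟨fun x => ξ (x.1, x.2), hcomp, fun x => ?_, fun x => ?_⟩ <;>
    simp only [AddCircle.coe_add_period]

theorem IsUniqueCrossing.eq_of_snd_eq_zero {ψ : ℝ → ℂ × ℂ} (hψ_unit : ∀ s, herm (ψ s) (ψ s) = 1)
    {l c d : ℝ} (hper : Function.Periodic ψ l) (hc : IsUniqueCrossing ψ l c d)
    (him : 0 < (herm (ψ c) (ψ d)).im) {h : ℝ → ℂ × ℂ} {a b : ℝ} {β : ℂ}
    (hh : IsQuadrantPath h a b β) (hne : ∀ s u, relColumn (ψ s) (ψ u) ≠ (-1, 0))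
    {ξ : ℝ × ℝ → ℂ × ℂ}
    (hξ : IsEigenSection (fun x => stereo (relColumn (ψ x.1) (ψ x.2)) - stereo (h b)) ξ)
    {x : ℝ × ℝ} (hx : (ξ x).2 = 0) : ∃ m n : ℤ, x = (c, d) + (m * l, n * l) := by
  have hpos : ∀ s u, 0 < 1 + (herm (ψ s) (ψ u)).re := fun s u =>
    one_add_re_pos (herm_relColumn (hψ_unit s) (hψ_unit u)) (hne s u)
  have harea : area (ψ x.1) (ψ x.2) = 0 := by
    have := hξ.fst_eq_zero hx
    simp only [WithLp.sub_fst, stereo_fst, hh.right, zero_div, sub_zero, relColumn] at this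
    exact (div_eq_zero_iff.1 this).resolve_right
      (Complex.ofReal_ne_zero.2 (hpos x.1 x.2).ne')
  have him_pos : 0 < (herm (ψ x.1) (ψ x.2)).im := by
    have := hξ.snd_nonneg hx
    simp only [WithLp.sub_snd, stereo_snd, hh.right, relColumn, sub_nonneg] at this
    exact (div_pos_iff_of_pos_right (hpos x.1 x.2)).1 (hh.slope_pos.trans_le this)
  rcases hc.classify harea with ⟨n, hn⟩ | ⟨m, n, h1, h2⟩ | ⟨m, n, h1, h2⟩
  · rw [hn, hper.int_mul n, hψ_unit, Complex.one_im] at him_pos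
    exact absurd him_pos (lt_irrefl 0)
  · exact ⟨m, n, Prod.ext h1 h2⟩
  · rw [h1, h2, hper.int_mul m, hper.int_mul n, herm_swap, Complex.conj_im] at him_pos
    linarith

theorem IsUniqueCrossing.stereo_sub_snd_pos {ψ : ℝ → ℂ × ℂ} (hψ_unit : ∀ s, herm (ψ s) (ψ s) = 1)
    {l c d : ℝ} (hc : IsUniqueCrossing ψ l c d) (hre : (herm (ψ c) (ψ d)).re < 0)
    (him : 0 < (herm (ψ c) (ψ d)).im) {h : ℝ → ℂ × ℂ} {a b : ℝ} {β : ℂ}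
    (hh : IsQuadrantPath h a b β) :
    0 < (stereo (relColumn (ψ c) (ψ d)) - stereo (h b)).snd := by
  have hsq := re_sq_add_im_sq_of_area_eq_zero (hψ_unit c) (hψ_unit d) hc.area_eq_zero
  have hpos : 0 < 1 + (herm (ψ c) (ψ d)).re := by nlinarith
  have hone : 1 < (herm (ψ c) (ψ d)).im / (1 + (herm (ψ c) (ψ d)).re) := by
    rw [lt_div_iff₀ hpos]
    nlinarith
  simp only [WithLp.sub_snd, stereo_snd, hh.right, relColumn, sub_pos]
  exact hh.slope_lt_one.trans hone

theorem IsSpinorCurve.tendsto_stereo_fst_div {ψ : ℝ → ℂ × ℂ} {v : ℝ → ℝ} (hψ : IsSpinorCurve ψ v)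
    {c d : ℝ} (h0 : area (ψ c) (ψ d) = 0) (htrans : (herm (ψ c) (ψ d) ^ 2).im ≠ 0)
    (hpos : 0 < 1 + (herm (ψ c) (ψ d)).re) :
    Tendsto (fun x : ℝ × ℝ => (stereo (relColumn (ψ x.1) (ψ x.2))).fst /
        crossingDeriv (v c) (v d) (herm (ψ c) (ψ d)) (x - (c, d)))
      (𝓝[≠] (c, d)) (𝓝 (1 / (1 + (herm (ψ c) (ψ d)).re : ℝ))) := by
  have hquot := tendsto_div_of_hasFDerivAt (hψ.hasFDerivAt_area h0)
    (crossingDeriv_injective (hψ.pos c) (hψ.pos d) htrans) h0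
  have hψ_cont := hψ.contDiff.continuous
  have hden : Continuous fun x : ℝ × ℝ => ((1 + (herm (ψ x.1) (ψ x.2)).re : ℝ) : ℂ) := by
    unfold herm
    fun_prop
  refine (hquot.div ((hden.tendsto (c, d)).mono_left nhdsWithin_le_nhds)
    (Complex.ofReal_ne_zero.2 hpos.ne')).congr fun x => ?_
  rw [Pi.div_apply, stereo_fst, div_right_comm]
  rfl

theorem IsSpinorCurve.exists_relColumn_eq {ψ : ℝ → ℂ × ℂ} {v : ℝ → ℝ} (hψ : IsSpinorCurve ψ v)
    {l c d : ℝ} (hl : 0 < l) (hper : Function.Periodic ψ l) (hc : IsUniqueCrossing ψ l c d)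
    (hre : (herm (ψ c) (ψ d)).re < 0) (him : 0 < (herm (ψ c) (ψ d)).im)
    {h : ℝ → ℂ × ℂ} {a b : ℝ} {β : ℂ} (hh : IsQuadrantPath h a b β) :
    ∃ s u, ∃ t ∈ Icc a b, relColumn (ψ s) (ψ u) = h t := by
  by_contra! hne
  have hne' : ∀ s u, relColumn (ψ s) (ψ u) ≠ (-1, 0) := fun s u =>
    hh.left ▸ hne s u a (left_mem_Icc.2 hh.lt.le)
  have hpos : ∀ x : ℝ × ℝ, 0 < 1 + (herm (ψ x.1) (ψ x.2)).re := fun x =>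
    one_add_re_pos (herm_relColumn (hψ.unit x.1) (hψ.unit x.2)) (hne' x.1 x.2)
  obtain ⟨ξ, hξ, hfst, hsnd⟩ :=
    exists_periodic_isEigenSection hψ.contDiff.continuous hψ.unit hl hper hh hne
  have hfst_zero : (stereo (h b)).fst = 0 := by rw [stereo_fst, hh.right, zero_div]
  have hlim := hψ.tendsto_stereo_fst_div hc.area_eq_zero hc.transversal (hpos (c, d))
  have hw : Continuous fun x : ℝ × ℝ => stereo (relColumn (ψ x.1) (ψ x.2)) - stereo (h b) := by
    refine (continuous_stereo_comp ?_ hpos).sub continuous_const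
    have := hψ.contDiff.continuous
    unfold relColumn herm area
    fun_prop
  obtain ⟨m, hm, hξ_lim⟩ := hξ.exists_tendsto_snd_div (x₀ := (c, d)) hw
    (by rw [WithLp.sub_fst, hfst_zero, sub_zero, stereo_fst, relColumn, hc.area_eq_zero, zero_div])
    (hc.stereo_sub_snd_pos hψ.unit hre him hh)
    (one_div_ne_zero (Complex.ofReal_ne_zero.2 (hpos (c, d)).ne'))
    nhdsWithin_le_nhds (hlim.congr fun x => by rw [WithLp.sub_fst, hfst_zero, sub_zero])
  exact not_exists_unique_nondegenerate_zero_of_doublyPeriodic hl hξ.continuous.snd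
    (fun x => congrArg Prod.snd (hfst x)) (fun x => congrArg Prod.snd (hsnd x))
    (fun x => hc.eq_of_snd_eq_zero hψ.unit hper him hh hne' hξ)
    (crossingDeriv_injective (hψ.pos c) (hψ.pos d) hc.transversal) hm hξ_lim

theorem IsSpinorShell.exists_isQuadrantPath {φ : ℝ → ℂ × ℂ} {v : ℝ → ℝ} (hφ : IsSpinorCurve φ v)
    {a b : ℝ} (hs : IsSpinorShell φ a b) :
    ∃ h β, IsQuadrantPath h a b β ∧ ∀ t, ∃ s u, h t = -relColumn (φ s) (φ u) := by
  have hre := hφ.re_herm_neg_of_shell hs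
  have him : (herm (φ a) (φ b)).im ≠ 0 := fun h0 => hs.transversal (by simp [pow_two, h0])
  have hφ_cont := hφ.contDiff.continuous
  have hunit : ∀ s u, herm (-relColumn (φ s) (φ u)) (-relColumn (φ s) (φ u)) = 1 := fun s u => by
    rw [← herm_relColumn (hφ.unit s) (hφ.unit u)]
    simp [herm]
  have hne : ∀ t ∈ Ioc a b, area (φ a) (φ t) = 0 → herm (φ a) (φ t) ≠ 1 := by
    intro t ht h0 h1
    obtain ⟨-, rfl⟩ := hs.eq_endpoints le_rfl ht.1 ht.2 h0
    rw [h1, Complex.one_re] at hre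
    linarith
  rcases him.lt_or_gt with him | him
  · refine ⟨fun t => -relColumn (φ a) (φ t), -herm (φ a) (φ b), ⟨hs.lt, ?_, fun t => hunit a t, ?_,
      fun t ht h => ?_, ?_, by simpa using hre, by simpa using him⟩, fun t => ⟨a, t, rfl⟩⟩
    · unfold relColumn herm area
      fun_prop
    · simp [relColumn, hφ.unit, area_self]
    · obtain ⟨h1, h2⟩ := Prod.ext_iff.1 h
      exact hne t ht (neg_eq_zero.1 h2) (neg_injective h1)
    · simp [relColumn, hs.area_eq_zero]
  · refine ⟨fun t => -relColumn (φ t) (φ a), -herm (φ b) (φ a), ⟨hs.lt, ?_, fun t => hunit t a, ?_,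
      fun t ht h => ?_, ?_, ?_, ?_⟩, fun t => ⟨t, a, rfl⟩⟩
    · unfold relColumn herm area
      fun_prop
    · simp [relColumn, hφ.unit, area_self]
    · obtain ⟨h1, h2⟩ := Prod.ext_iff.1 h
      refine hne t ht ?_ ?_
      · rw [area_swap, neg_eq_zero]
        exact neg_eq_zero.1 h2
      · rw [herm_swap, show herm (φ t) (φ a) = 1 from neg_injective h1, map_one]
    · simp [relColumn, area_swap (φ a), hs.area_eq_zero]
    · simpa [herm_swap (φ a)] using hre
    · simpa [herm_swap (φ a)] using him

theorem IsUniqueCrossing.exists_relColumn_eq_neg {ψ φ : ℝ → ℂ × ℂ} {v w : ℝ → ℝ}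
    (hψ : IsSpinorCurve ψ v) {l c d : ℝ} (hl : 0 < l) (hper : Function.Periodic ψ l)
    (hc : IsUniqueCrossing ψ l c d) (hcd : IsSpinorShell ψ c d)
    (hφ : IsSpinorCurve φ w) {a b : ℝ} (hs : IsSpinorShell φ a b) :
    ∃ s u t t', relColumn (ψ s) (ψ u) = -relColumn (φ t) (φ t') := by
  have hre := hψ.re_herm_neg_of_shell hcd
  have him : (herm (ψ c) (ψ d)).im ≠ 0 := fun h0 => hc.transversal (by simp [pow_two, h0])
  obtain ⟨h, β, hh, hh_eq⟩ := hs.exists_isQuadrantPath hφ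
  suffices ∃ s u, ∃ t ∈ Icc a b, relColumn (ψ s) (ψ u) = h t by
    obtain ⟨s, u, t, -, hsu⟩ := this
    obtain ⟨t', t'', ht⟩ := hh_eq t
    exact ⟨s, u, t', t'', hsu.trans ht⟩
  rcases him.lt_or_gt with him | him
  · refine hψ.exists_relColumn_eq hl hper hc.symm ?_ ?_ hh <;> simpa [herm_swap (ψ c)]
  · exact hψ.exists_relColumn_eq hl hper hc hre him hh

/-! ### Lifts and the Hopf map -/

theorem norm3_pos {a : R3} (ha : a ≠ 0) : 0 < norm3 a := by
  refine Real.sqrt_pos.2 (lt_of_not_ge fun h => ha ?_)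
  simp only [dot3] at h
  ext i
  fin_cases i <;> simp only [Fin.zero_eta, Fin.mk_one, Fin.reduceFinMk, Pi.zero_apply] <;>
    nlinarith [sq_nonneg (a 0), sq_nonneg (a 1), sq_nonneg (a 2)]

theorem toSu2_injective : Function.Injective toSu2 := by
  intro a b h
  have h10 := congrFun (congrFun h 1) 0
  have h00 := congrFun (congrFun h 0) 0
  simp only [toSu2, E1, E2, E3, Matrix.add_apply, Matrix.smul_apply, Matrix.of_apply,
    Matrix.cons_val', Matrix.cons_val_zero, Matrix.cons_val_one, Matrix.cons_val_fin_one,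
    smul_eq_mul, mul_zero, mul_one, add_zero, zero_add] at h10 h00
  have hre := congrArg Complex.re h10
  have him := congrArg Complex.im h10
  have him' := congrArg Complex.im h00
  simp only [Complex.add_re, Complex.add_im, Complex.re_ofReal_mul, Complex.im_ofReal_mul,
    Complex.I_re, Complex.I_im, Complex.ofReal_re, Complex.ofReal_im, mul_zero, mul_one, zero_add,
    add_zero] at hre him him'
  ext i
  fin_cases i
  exacts [him, hre, him']

theorem inv_eq_star_of_mem_unitaryGroup {A : Mat2} (hA : A ∈ Matrix.unitaryGroup (Fin 2) ℂ) :
    A⁻¹ = star A :=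
  Matrix.inv_eq_right_inv (Matrix.mem_unitaryGroup_iff.1 hA)

/-- The first column of a matrix. An element of `SU(2)` is determined by its first column. -/
def firstColumn (A : Mat2) : ℂ × ℂ := (A 0 0, A 1 0)

theorem eq_of_mem_specialUnitaryGroup {A : Mat2} (hA : A ∈ Matrix.specialUnitaryGroup (Fin 2) ℂ) :
    A = !![(firstColumn A).1, -conj (firstColumn A).2;
      (firstColumn A).2, conj (firstColumn A).1] := by
  obtain ⟨hU, hdet⟩ := Matrix.mem_specialUnitaryGroup_iff.1 hA
  have hstar : star A = A.adjugate := by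
    rw [← inv_eq_star_of_mem_unitaryGroup hU, Matrix.inv_def, hdet, Ring.inverse_one, one_smul]
  have h00 := congrFun (congrFun hstar 0) 0
  have h01 := congrFun (congrFun hstar 0) 1
  simp only [Matrix.star_apply, Matrix.adjugate_fin_two, Matrix.of_apply, Matrix.cons_val',
    Matrix.cons_val_zero, Matrix.cons_val_one, Matrix.cons_val_fin_one, RCLike.star_def] at h00 h01
  ext i j
  fin_cases i <;> fin_cases j <;> simp [firstColumn, h00, h01]

theorem herm_firstColumn_self {A : Mat2} (hA : A ∈ Matrix.unitaryGroup (Fin 2) ℂ) :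
    herm (firstColumn A) (firstColumn A) = 1 := by
  have h := congrFun (congrFun (Matrix.mem_unitaryGroup_iff'.1 hA) 0) 0
  simpa [herm, firstColumn, Matrix.mul_apply, Fin.sum_univ_two] using h

theorem star_mul_eq_of_mem_specialUnitaryGroup {A B : Mat2}
    (hA : A ∈ Matrix.specialUnitaryGroup (Fin 2) ℂ)
    (hB : B ∈ Matrix.specialUnitaryGroup (Fin 2) ℂ) :
    star A * B =
      !![herm (firstColumn A) (firstColumn B), -conj (area (firstColumn A) (firstColumn B));
        area (firstColumn A) (firstColumn B), conj (herm (firstColumn A) (firstColumn B))] := by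
  rw [eq_of_mem_specialUnitaryGroup hA, eq_of_mem_specialUnitaryGroup hB]
  ext i j
  fin_cases i <;> fin_cases j <;>
    simp [Matrix.mul_apply, Fin.sum_univ_two, herm, area, firstColumn] <;> ring

/-- The Hopf map: the point `Ad(A)e₃` of the sphere, in terms of the first column `x` of `A`. -/
def hopf (x : ℂ × ℂ) : R3 :=
  ![2 * (conj x.1 * x.2).re, -2 * (conj x.1 * x.2).im, Complex.normSq x.1 - Complex.normSq x.2]

/-- The tangent vector `Ad(A)e₁` to the sphere at `Ad(A)e₃`, in terms of the first column `x` of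
`A`. -/
def hopfTangent (x : ℂ × ℂ) : R3 :=
  ![(conj x.1 ^ 2 - x.2 ^ 2).re, -(conj x.1 ^ 2 - x.2 ^ 2).im, -2 * (x.1 * x.2).re]

theorem adM_E3 {A : Mat2} (hA : A ∈ Matrix.specialUnitaryGroup (Fin 2) ℂ) :
    AdM A E3 = toSu2 (hopf (firstColumn A)) := by
  have hU := (Matrix.mem_specialUnitaryGroup_iff.1 hA).1
  rw [AdM, inv_eq_star_of_mem_unitaryGroup hU, eq_of_mem_specialUnitaryGroup hA]
  ext i j
  fin_cases i <;> fin_cases j <;> apply Complex.ext <;>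
    simp [Matrix.mul_apply, Fin.sum_univ_two, E1, E2, E3, toSu2, hopf, firstColumn,
      Complex.normSq_apply] <;> ring

theorem adM_E1 {A : Mat2} (hA : A ∈ Matrix.specialUnitaryGroup (Fin 2) ℂ) :
    AdM A E1 = toSu2 (hopfTangent (firstColumn A)) := by
  have hU := (Matrix.mem_specialUnitaryGroup_iff.1 hA).1
  rw [AdM, inv_eq_star_of_mem_unitaryGroup hU, eq_of_mem_specialUnitaryGroup hA]
  ext i j
  fin_cases i <;> fin_cases j <;> apply Complex.ext <;>
    simp [Matrix.mul_apply, Fin.sum_univ_two, E1, E2, E3, toSu2, hopfTangent, firstColumn, sq] <;>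
    ring

theorem dot3_hopf_hopf (x y : ℂ × ℂ) : dot3 (hopf x) (hopf y) =
    (herm x x).re * (herm y y).re - 2 * Complex.normSq (area x y) := by
  simp only [dot3, hopf, herm, area, Complex.normSq_apply, Complex.add_re, Complex.mul_re,
    Complex.mul_im, Complex.sub_re, Complex.sub_im, Complex.conj_re, Complex.conj_im, cons_val]
  ring

theorem hopf_smul (α : ℂ) (x : ℂ × ℂ) : hopf (α • x) = Complex.normSq α • hopf x := by
  ext i
  fin_cases i <;> simp [hopf, Complex.normSq_apply] <;> ring

theorem hopfTangent_smul {α : ℂ} {r : ℝ} (h : α ^ 2 = r) (x : ℂ × ℂ) :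
    hopfTangent (α • x) = r • hopfTangent x := by
  have hconj : conj α ^ 2 = r := by rw [← map_pow, h, Complex.conj_ofReal]
  ext i
  fin_cases i <;> simp only [hopfTangent, Prod.smul_fst, Prod.smul_snd, smul_eq_mul, map_mul,
    mul_pow, hconj, h, mul_mul_mul_comm α, ← sq α, ← mul_sub, Complex.re_ofReal_mul,
    Complex.im_ofReal_mul] <;> simp <;> ring

theorem dot3_hopfTangent_smul (α : ℂ) (x : ℂ × ℂ) :
    dot3 (hopfTangent x) (hopfTangent (α • x)) = (α ^ 2).re * (herm x x).re ^ 2 := by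
  simp only [dot3, hopfTangent, herm, sq, Complex.add_re, Complex.mul_re, Complex.mul_im,
    Complex.sub_re, Complex.sub_im, Complex.conj_re, Complex.conj_im, cons_val, Prod.smul_fst,
    Prod.smul_snd, smul_eq_mul, map_mul]
  ring

theorem hopf_eq_iff {x y : ℂ × ℂ} (hx : herm x x = 1) (hy : herm y y = 1) :
    hopf x = hopf y ↔ area x y = 0 := by
  constructor <;> intro h
  · have hxy := dot3_hopf_hopf x y
    rw [h, dot3_hopf_hopf, area_self, hx, hy] at hxy
    rw [map_zero, mul_zero, sub_zero, eq_comm, sub_eq_self] at hxy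
    exact Complex.normSq_eq_zero.1 ((mul_eq_zero.1 hxy).resolve_left two_ne_zero)
  · rw [eq_herm_smul_of_area_eq_zero hx h, hopf_smul, Complex.normSq_apply, ← sq, ← sq,
      re_sq_add_im_sq_of_area_eq_zero hx hy h, one_smul]

/-- The derivative at `x` of the Hopf map in the direction `y`. -/
def hopfDeriv (x y : ℂ × ℂ) : R3 :=
  ![2 * (conj y.1 * x.2 + conj x.1 * y.2).re, -2 * (conj y.1 * x.2 + conj x.1 * y.2).im,
    2 * (conj x.1 * y.1 - conj x.2 * y.2).re]

theorem hasDerivAt_hopf_comp {ψ : ℝ → ℂ × ℂ} {ψ' : ℂ × ℂ} {s : ℝ} (h : HasDerivAt ψ ψ' s) :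
    HasDerivAt (fun t => hopf (ψ t)) (hopfDeriv (ψ s) ψ') s := by
  have hfst : HasDerivAt (fun t => (ψ t).1) ψ'.1 s := h.fst
  have hsnd : HasDerivAt (fun t => (ψ t).2) ψ'.2 s := h.snd
  have hfst_conj : HasDerivAt (fun t => conj (ψ t).1) (conj ψ'.1) s := hfst.star
  have hsnd_conj : HasDerivAt (fun t => conj (ψ t).2) (conj ψ'.2) s := hsnd.star
  have hprod := hfst_conj.mul hsnd
  have hre := Complex.reCLM.hasFDerivAt.comp_hasDerivAt s hprod
  have him := Complex.imCLM.hasFDerivAt.comp_hasDerivAt s hprod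
  have hdiff := Complex.reCLM.hasFDerivAt.comp_hasDerivAt s
    ((hfst_conj.mul hfst).sub (hsnd_conj.mul hsnd))
  refine hasDerivAt_pi.2 fun i => ?_
  fin_cases i
  · exact hre.const_mul 2
  · exact him.const_mul (-2)
  · convert hdiff using 1
    · ext t
      simp [hopf, Complex.normSq_apply]
    · simp only [hopfDeriv, Fin.reduceFinMk, cons_val, Complex.reCLM_apply, Complex.add_re,
        Complex.sub_re, Complex.mul_re, Complex.conj_re, Complex.conj_im]
      ring

theorem area_eq_half_of_hopfDeriv_eq {x y : ℂ × ℂ} {m : ℝ} (hx : herm x x = 1)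
    (hxy : (herm x y).re = 0) (h : hopfDeriv x y = m • hopfTangent x) : area x y = (m / 2 : ℝ) := by
  obtain ⟨x₁, x₂⟩ := x
  obtain ⟨y₁, y₂⟩ := y
  simp only [herm, area] at hx hxy ⊢
  have hoff : 2 * (conj y₁ * x₂ + conj x₁ * y₂) = m * (conj x₁ ^ 2 - x₂ ^ 2) := by
    have hre := congrFun h 0
    have him := congrFun h 1
    simp only [hopfDeriv, hopfTangent, cons_val_zero, cons_val_one, Pi.smul_apply, smul_eq_mul,
      Complex.add_re, Complex.add_im, Complex.sub_re, Complex.sub_im, Complex.mul_re,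
      Complex.mul_im, Complex.conj_re, Complex.conj_im] at hre him
    apply Complex.ext <;> simp <;> linarith
  have hoff_conj := congrArg conj hoff
  simp only [map_add, map_sub, map_mul, map_pow, Complex.conj_conj, Complex.conj_ofReal,
    map_ofNat] at hoff_conj
  have hdiag : conj y₁ * x₁ + conj x₁ * y₁ - conj y₂ * x₂ - conj x₂ * y₂ =
      -(m * (x₁ * x₂ + conj x₁ * conj x₂)) := by
    have hre := congrFun h 2
    simp only [hopfDeriv, hopfTangent, cons_val, Pi.smul_apply, smul_eq_mul, Complex.sub_re,
      Complex.mul_re, Complex.conj_re, Complex.conj_im] at hre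
    apply Complex.ext <;> simp <;> linarith
  have hsum : conj y₁ * x₁ + conj x₁ * y₁ + conj y₂ * x₂ + conj x₂ * y₂ = 0 := by
    simp only [Complex.add_re, Complex.mul_re, Complex.conj_re, Complex.conj_im] at hxy
    apply Complex.ext <;> simp <;> linarith
  have hP : conj x₁ * (x₁ * y₂ - x₂ * y₁) = m / 2 * conj x₁ := by
    linear_combination x₁ / 2 * hoff - x₂ / 2 * (hdiag + hsum) + m / 2 * conj x₁ * hx
  have hQ : conj x₂ * (x₁ * y₂ - x₂ * y₁) = m / 2 * conj x₂ := by
    linear_combination x₁ / 2 * (hsum - hdiag) - x₂ / 2 * hoff_conj + m / 2 * conj x₂ * hx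
  push_cast
  linear_combination x₁ * hP + x₂ * hQ - (x₁ * y₂ - x₂ * y₁ - m / 2) * hx

theorem re_herm_eq_zero_of_hasDerivAt {ψ : ℝ → ℂ × ℂ} {ψ' : ℂ × ℂ} {s : ℝ}
    (h : HasDerivAt ψ ψ' s) (hψ : ∀ t, herm (ψ t) (ψ t) = 1) : (herm (ψ s) ψ').re = 0 := by
  have hfst : HasDerivAt (fun t => (ψ t).1) ψ'.1 s := h.fst
  have hsnd : HasDerivAt (fun t => (ψ t).2) ψ'.2 s := h.snd
  have hherm := ((hfst.star.mul hfst).add (hsnd.star.mul hsnd)).congr_of_eventuallyEq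
    (.of_forall fun t => (hψ t).symm)
  have := congrArg Complex.re (hherm.unique (hasDerivAt_const s 1))
  simp only [herm, Complex.star_def, Complex.add_re, Complex.mul_re, Complex.conj_re,
    Complex.conj_im, Complex.zero_re] at this ⊢
  linarith

namespace IsLift

variable {γ : ℝ → R3} {c : ℝ → Mat2}

theorem mem_unitaryGroup (hc : IsLift γ c) (s : ℝ) : c s ∈ Matrix.unitaryGroup (Fin 2) ℂ :=
  (Matrix.mem_specialUnitaryGroup_iff.1 (hc.mem s)).1

theorem herm_firstColumn_self (hc : IsLift γ c) (s : ℝ) :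
    herm (firstColumn (c s)) (firstColumn (c s)) = 1 :=
  _root_.herm_firstColumn_self (hc.mem_unitaryGroup s)

theorem hopf_firstColumn (hc : IsLift γ c) (s : ℝ) : hopf (firstColumn (c s)) = γ s :=
  toSu2_injective ((adM_E3 (hc.mem s)).symm.trans (hc.ad3 s))

theorem hopfTangent_firstColumn (hc : IsLift γ c) (s : ℝ) :
    hopfTangent (firstColumn (c s)) = (norm3 (deriv γ s))⁻¹ • deriv γ s :=
  toSu2_injective ((adM_E1 (hc.mem s)).symm.trans (hc.ad1 s))

theorem smul_hopfTangent_firstColumn (hreg : IsRegularCurve γ) (hc : IsLift γ c) (s : ℝ) :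
    norm3 (deriv γ s) • hopfTangent (firstColumn (c s)) = deriv γ s := by
  rw [hc.hopfTangent_firstColumn, smul_inv_smul₀ (norm3_pos (hreg.reg s)).ne']

theorem eq_iff (hc : IsLift γ c) {s u : ℝ} :
    γ s = γ u ↔ area (firstColumn (c s)) (firstColumn (c u)) = 0 := by
  rw [← hc.hopf_firstColumn, ← hc.hopf_firstColumn,
    hopf_eq_iff (hc.herm_firstColumn_self s) (hc.herm_firstColumn_self u)]

theorem isSpinorCurve (hreg : IsRegularCurve γ) (hc : IsLift γ c) :
    IsSpinorCurve (fun s => firstColumn (c s)) fun s => norm3 (deriv γ s) / 2 := by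
  have hsmooth : ContDiff ℝ (⊤ : ℕ∞) fun s => firstColumn (c s) :=
    (hc.smooth 0 0).prodMk (hc.smooth 1 0)
  have hderiv : ∀ s, HasDerivAt (fun s => firstColumn (c s))
      (deriv (fun s => firstColumn (c s)) s) s := fun s =>
    (hsmooth.differentiable (by simp) s).hasDerivAt
  refine ⟨hsmooth.of_le (by exact_mod_cast le_top), hc.herm_firstColumn_self, fun s => ?_,
    fun s => half_pos (norm3_pos (hreg.reg s))⟩
  have hre := re_herm_eq_zero_of_hasDerivAt (hderiv s) hc.herm_firstColumn_self
  refine area_eq_half_of_hopfDeriv_eq (hc.herm_firstColumn_self s) hre ?_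
  rw [hc.smul_hopfTangent_firstColumn hreg, ← (hasDerivAt_hopf_comp (hderiv s)).deriv]
  simp only [hc.hopf_firstColumn]

theorem herm_sq_im_ne_zero (hreg : IsRegularCurve γ) (hc : IsLift γ c) {s u : ℝ} (h : γ s = γ u)
    (hli : LinearIndependent ℝ ![deriv γ s, deriv γ u]) :
    (herm (firstColumn (c s)) (firstColumn (c u)) ^ 2).im ≠ 0 := by
  intro him
  set α := herm (firstColumn (c s)) (firstColumn (c u)) with hα
  have hα_sq : α ^ 2 = ((α ^ 2).re : ℂ) := Complex.ext rfl him
  have hs := hc.smul_hopfTangent_firstColumn hreg s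
  have hu := hc.smul_hopfTangent_firstColumn hreg u
  rw [eq_herm_smul_of_area_eq_zero (hc.herm_firstColumn_self s) (hc.eq_iff.1 h), ← hα,
    hopfTangent_smul hα_sq] at hu
  have hpos := norm3_pos (hreg.reg s)
  set m := norm3 (deriv γ s)
  set n := norm3 (deriv γ u)
  have hdep : (n * (α ^ 2).re) • deriv γ s + (-m) • deriv γ u = 0 := by
    rw [← hs, ← hu]
    module
  exact hpos.ne' (neg_eq_zero.1 (LinearIndependent.pair_iff.1 hli _ _ hdep).2)

theorem herm_sq_eq_one (hc : IsLift γ c) {s u : ℝ} (h : γ s = γ u) (h' : deriv γ s = deriv γ u) :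
    herm (firstColumn (c s)) (firstColumn (c u)) ^ 2 = 1 := by
  have hunit := hc.herm_firstColumn_self s
  have h0 := hc.eq_iff.1 h
  have hu := eq_herm_smul_of_area_eq_zero hunit h0
  set α := herm (firstColumn (c s)) (firstColumn (c u)) with hα
  have hdot := dot3_hopfTangent_smul α (firstColumn (c s))
  have hdot1 := dot3_hopfTangent_smul 1 (firstColumn (c s))
  rw [← hu, hc.hopfTangent_firstColumn u, ← h', ← hc.hopfTangent_firstColumn s] at hdot
  rw [one_smul, hdot, hunit] at hdot1
  have hre : (α ^ 2).re = 1 := by simpa using hdot1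
  have hsq := re_sq_add_im_sq_of_area_eq_zero hunit (hc.herm_firstColumn_self u) h0
  rw [← hα] at hsq
  simp only [sq, Complex.mul_re] at hsq hre
  have him : α.im = 0 := by nlinarith
  refine Complex.ext ?_ ?_
  · simpa [sq] using hre
  · simp [sq, him]

end IsLift

/-! ### Curves with one crossing -/

theorem int_eq_zero_of_abs_mul_lt {n : ℤ} {l : ℝ} (h : |n * l| < l) : n = 0 := by
  have hl : 0 < l := (abs_nonneg _).trans_lt h
  rw [abs_mul, abs_of_pos hl, mul_lt_iff_lt_one_left hl] at h
  exact Int.abs_lt_one_iff.1 (by exact_mod_cast h)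

theorem exists_double_point_of_crossings_eq_one {γ : ℝ → R3} {l : ℝ} (hper : HasPeriod γ l)
    (hgen : IsGeneric γ l) (hcr : crossings γ l = 1) :
    ∃ a b, a < b ∧ b < a + l ∧ γ a = γ b ∧ ∀ {s u}, γ s = γ u → (∃ n : ℤ, u = s + n * l) ∨
      (∃ m n : ℤ, s = a + m * l ∧ u = b + n * l) ∨ ∃ m n : ℤ, s = b + m * l ∧ u = a + n * l := by
  obtain ⟨P, hP⟩ := Set.ncard_eq_one.1 hcr
  have hmem : ∀ {s t}, γ s = γ t → (¬∃ k : ℤ, s - t = k * l) → γ s = P := fun {s t} hst hk =>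
    mem_singleton_iff.1 (hP ▸ ⟨s, t, rfl, hst.symm, hk⟩)
  obtain ⟨a, t, ha, ht, hat⟩ := hP.superset rfl
  obtain ⟨n, hn, -⟩ := existsUnique_add_zsmul_mem_Ico hper.1 t a
  rw [zsmul_eq_mul] at hn
  have hγb : γ a = γ (t + n * l) := by
    rw [Function.Periodic.int_mul hper.2 n t, ha, ht]
  have hab : ¬∃ k : ℤ, a - (t + n * l) = k * l := by
    rintro ⟨k, hk⟩
    exact hat ⟨k + n, by push_cast; linarith⟩
  refine ⟨a, t + n * l, lt_of_le_of_ne hn.1 fun h => hab ⟨0, by simp [← h]⟩, hn.2, hγb,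
    fun {s u} hsu => or_iff_not_imp_left.2 fun hk => ?_⟩
  have hs : γ s = γ a := (hmem hsu fun ⟨k, hk'⟩ => hk ⟨-k, by push_cast; linarith⟩).trans ha.symm
  obtain ⟨-, hg⟩ := hgen a _ hγb hab
  rcases hg s hs with ⟨m, hm⟩ | ⟨m, hm⟩ <;> rcases hg u (hsu.symm.trans hs) with ⟨k, hk'⟩ | ⟨k, hk'⟩
  · exact absurd ⟨k - m, by push_cast; linarith⟩ hk
  · exact Or.inl ⟨m, k, by linarith, by linarith⟩
  · exact Or.inr ⟨m, k, by linarith, by linarith⟩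
  · exact absurd ⟨k - m, by push_cast; linarith⟩ hk

theorem exists_isShell_of_crossings_eq_one {γ : ℝ → R3} {l : ℝ} (hper : HasPeriod γ l)
    (hgen : IsGeneric γ l) (hcr : crossings γ l = 1) :
    ∃ a b, IsShell γ a b ∧ ∀ {s u}, γ s = γ u → (∃ n : ℤ, u = s + n * l) ∨
      (∃ m n : ℤ, s = a + m * l ∧ u = b + n * l) ∨ ∃ m n : ℤ, s = b + m * l ∧ u = a + n * l := by
  obtain ⟨a, b, hab, hba, hγ, hclass⟩ := exists_double_point_of_crossings_eq_one hper hgen hcr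
  refine ⟨a, b, ⟨hab, fun s hs u hu hsu => ?_, hγ, (hgen a b hγ ?_).1⟩, hclass⟩
  · have hzero : ∀ {x : ℝ} {n : ℤ}, x + n * l ∈ Ico a b → x ∈ Icc a b → n = 0 := fun hxn hx =>
      int_eq_zero_of_abs_mul_lt (l := l)
        (abs_lt.2 ⟨by linarith [hxn.1, hx.2], by linarith [hxn.2, hx.1]⟩)
    rcases hclass hsu with ⟨n, rfl⟩ | ⟨m, n, -, rfl⟩ | ⟨m, n, rfl, -⟩
    · obtain rfl := hzero hu (Ico_subset_Icc_self hs)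
      simp
    · obtain rfl := hzero hu (right_mem_Icc.2 hab.le)
      simp at hu
    · obtain rfl := hzero hs (right_mem_Icc.2 hab.le)
      simp at hs
  · rintro ⟨k, hk⟩
    obtain rfl : k = 0 := int_eq_zero_of_abs_mul_lt
      (by rw [← hk, abs_lt]; exact ⟨by linarith, by linarith⟩)
    rw [Int.cast_zero, zero_mul, sub_eq_zero] at hk
    exact hab.ne hk

theorem IsShell.isSpinorShell {γ : ℝ → R3} {c : ℝ → Mat2} {a b : ℝ} (h : IsShell γ a b)
    (hreg : IsRegularCurve γ) (hc : IsLift γ c) :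
    IsSpinorShell (fun s => firstColumn (c s)) a b where
  lt := h.1
  area_eq_zero := hc.eq_iff.1 h.2.2.1
  transversal := hc.herm_sq_im_ne_zero hreg h.2.2.1 h.2.2.2
  eq_endpoints := by
    intro s u hs hsu hu h0
    obtain ⟨hab, hinj, hγ, -⟩ := h
    have hsu_eq := hc.eq_iff.2 h0
    rcases hu.eq_or_lt with rfl | hub
    · exact ⟨hinj ⟨hs, hsu⟩ (left_mem_Ico.2 hab) (hsu_eq.trans hγ.symm), rfl⟩
    · exact absurd (hinj ⟨hs, hsu.trans hub⟩ ⟨hs.trans hsu.le, hub⟩ hsu_eq) hsu.ne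

theorem IsLift.periodic_firstColumn {γ : ℝ → R3} {c : ℝ → Mat2} (hc : IsLift γ c) {l : ℝ}
    (hper : HasPeriod γ l)
    (hne : ∀ s u, relColumn (firstColumn (c s)) (firstColumn (c u)) ≠ (-1, 0)) :
    Function.Periodic (fun s => firstColumn (c s)) l := by
  intro s
  have hderiv : deriv γ s = deriv γ (s + l) := by
    rw [← deriv_comp_add_const, show (fun x => γ (x + l)) = γ from funext hper.2]
  have h0 := hc.eq_iff.1 (hper.2 s).symm
  have hherm := (sq_eq_one_iff.1 (hc.herm_sq_eq_one (hper.2 s).symm hderiv)).resolve_right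
    fun h => hne s (s + l) (Prod.ext h h0)
  simpa [hherm] using eq_herm_smul_of_area_eq_zero (hc.herm_firstColumn_self s) h0

theorem fmap_eq_neg_of_relColumn_eq_neg {γ1 γ2 : ℝ → R3} {c1 c2 : ℝ → Mat2} (hc1 : IsLift γ1 c1)
    (hc2 : IsLift γ2 c2) {s1 u1 s2 u2 : ℝ}
    (h : relColumn (firstColumn (c1 s1)) (firstColumn (c1 u1)) =
      -relColumn (firstColumn (c2 s2)) (firstColumn (c2 u2))) :
    fmap c1 c2 u1 u2 = -fmap c1 c2 s1 s2 := by
  obtain ⟨hherm, harea⟩ := Prod.ext_iff.1 h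
  simp only [relColumn, Prod.fst_neg, Prod.snd_neg] at hherm harea
  have hstar : star (c1 s1) * c1 u1 = -(star (c2 s2) * c2 u2) := by
    rw [star_mul_eq_of_mem_specialUnitaryGroup (hc1.mem _) (hc1.mem _),
      star_mul_eq_of_mem_specialUnitaryGroup (hc2.mem _) (hc2.mem _), hherm, harea]
    ext i j
    fin_cases i <;> fin_cases j <;> simp
  have hmul : c1 u1 * star (c2 u2) = -(c1 s1 * star (c2 s2)) :=
    calc c1 u1 * star (c2 u2) = c1 s1 * (star (c1 s1) * c1 u1) * star (c2 u2) := by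
          rw [← mul_assoc, Matrix.mem_unitaryGroup_iff.1 (hc1.mem_unitaryGroup s1), one_mul]
      _ = -(c1 s1 * star (c2 s2) * (c2 u2 * star (c2 u2))) := by
          simp only [hstar, mul_neg, neg_mul, mul_assoc]
      _ = -(c1 s1 * star (c2 s2)) := by
          rw [Matrix.mem_unitaryGroup_iff.1 (hc2.mem_unitaryGroup u2), mul_one]
  rw [fmap, fmap, inv_eq_star_of_mem_unitaryGroup (hc2.mem_unitaryGroup _),
    inv_eq_star_of_mem_unitaryGroup (hc2.mem_unitaryGroup _), mul_assoc (c1 0)⁻¹ (c1 u1), hmul,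
    mul_assoc (c1 0)⁻¹ (c1 s1), mul_neg, neg_mul]

theorem fmap_mem_unitaryGroup {γ1 γ2 : ℝ → R3} {c1 c2 : ℝ → Mat2} (hc1 : IsLift γ1 c1)
    (hc2 : IsLift γ2 c2) (s1 s2 : ℝ) : fmap c1 c2 s1 s2 ∈ Matrix.unitaryGroup (Fin 2) ℂ := by
  rw [fmap, inv_eq_star_of_mem_unitaryGroup (hc1.mem_unitaryGroup _),
    inv_eq_star_of_mem_unitaryGroup (hc2.mem_unitaryGroup _)]
  exact mul_mem (mul_mem (mul_mem (Unitary.star_mem (hc1.mem_unitaryGroup _))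
    (hc1.mem_unitaryGroup _)) (Unitary.star_mem (hc2.mem_unitaryGroup _))) (hc2.mem_unitaryGroup _)

theorem distS3_neg_self {A : Mat2} (hA : A ∈ Matrix.unitaryGroup (Fin 2) ℂ) :
    distS3 (-A) A = Real.pi := by
  have h : A * Aᴴ = 1 := Matrix.mem_unitaryGroup_iff.1 hA
  simp [distS3, h]

theorem extDiam_eq_pi_of_fmap_eq_neg {γ1 γ2 : ℝ → R3} {c1 c2 : ℝ → Mat2} (hc1 : IsLift γ1 c1)
    (hc2 : IsLift γ2 c2) {s1 s2 u1 u2 : ℝ} (h : fmap c1 c2 u1 u2 = -fmap c1 c2 s1 s2) :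
    extDiam c1 c2 = Real.pi := by
  refine IsGreatest.csSup_eq ⟨⟨u1, u2, s1, s2, ?_⟩, ?_⟩
  · rw [h, distS3_neg_self (fmap_mem_unitaryGroup hc1 hc2 s1 s2)]
  · rintro d ⟨s1, s2, u1, u2, rfl⟩
    exact Real.arccos_le_pi _

theorem exists_relColumn_firstColumn_eq_neg {γ1 γ2 : ℝ → R3} {l1 : ℝ} {c1 c2 : ℝ → Mat2}
    (hreg1 : IsRegularCurve γ1) (hreg2 : IsRegularCurve γ2) (hper1 : HasPeriod γ1 l1)
    (hgen1 : IsGeneric γ1 l1) (hcr1 : crossings γ1 l1 = 1) (hc1 : IsLift γ1 c1)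
    (hc2 : IsLift γ2 c2) {a b : ℝ} (hshell : IsShell γ2 a b) :
    ∃ s u t t', relColumn (firstColumn (c1 s)) (firstColumn (c1 u)) =
      -relColumn (firstColumn (c2 t)) (firstColumn (c2 t')) := by
  by_cases hne : ∀ s u, relColumn (firstColumn (c1 s)) (firstColumn (c1 u)) ≠ (-1, 0)
  · obtain ⟨c, d, hcd, hclass⟩ := exists_isShell_of_crossings_eq_one hper1 hgen1 hcr1
    have hcd := hcd.isSpinorShell hreg1 hc1
    exact IsUniqueCrossing.exists_relColumn_eq_neg (hc1.isSpinorCurve hreg1) hper1.1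
      (hc1.periodic_firstColumn hper1 hne)
      ⟨hcd.area_eq_zero, hcd.transversal, fun h0 => hclass (hc1.eq_iff.2 h0)⟩ hcd
      (hc2.isSpinorCurve hreg2) (hshell.isSpinorShell hreg2 hc2)
  · push Not at hne
    obtain ⟨s, u, hsu⟩ := hne
    refine ⟨s, u, 0, 0, ?_⟩
    rw [hsu]
    simp [relColumn, hc2.herm_firstColumn_self, area_self]

theorem stmt13_general {γ1 γ2 : ℝ → R3} {l1 : ℝ} {c1 c2 : ℝ → Mat2} (hreg1 : IsRegularCurve γ1)
    (hreg2 : IsRegularCurve γ2) (hper1 : HasPeriod γ1 l1) (hgen1 : IsGeneric γ1 l1)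
    (hc1 : IsLift γ1 c1) (hc2 : IsLift γ2 c2) (hcr1 : crossings γ1 l1 = 1) {a b : ℝ}
    (hshell : IsShell γ2 a b) :
    (∃ s1 s2 u1 u2 : ℝ, fmap c1 c2 u1 u2 = -fmap c1 c2 s1 s2) ∧ extDiam c1 c2 = Real.pi := by
  obtain ⟨s1, u1, s2, u2, h⟩ :=
    exists_relColumn_firstColumn_eq_neg hreg1 hreg2 hper1 hgen1 hcr1 hc1 hc2 hshell
  have hneg := fmap_eq_neg_of_relColumn_eq_neg hc1 hc2 h
  exact ⟨⟨s1, s2, u1, u2, hneg⟩, extDiam_eq_pi_of_fmap_eq_neg hc1 hc2 hneg⟩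

end

/-- Proposition A -/
theorem stmt13 (μ : ℝ) (γ1 γ2 : ℝ → R3) (l1 l2 : ℝ) (c1 c2 : ℝ → Mat2)
    (hμ : 0 < μ)
    (hreg1 : IsRegularCurve γ1) (hreg2 : IsRegularCurve γ2)
    (hper1 : HasPeriod γ1 l1) (hper2 : HasPeriod γ2 l2)
    (hadm1 : ∀ s, μ < kappa γ1 s) (hadm2 : ∀ s, kappa γ2 s < μ)
    (hpar1 : ∀ s, norm3 (deriv γ1 s) ^ 2 * (1 + kappa γ1 s ^ 2) = 4)
    (hpar2 : ∀ s, norm3 (deriv γ2 s) ^ 2 * (1 + kappa γ2 s ^ 2) = 4)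
    (hgen1 : IsGeneric γ1 l1) (hgen2 : IsGeneric γ2 l2)
    (hc1 : IsLift γ1 c1) (hc2 : IsLift γ2 c2)
    (hcr1 : crossings γ1 l1 = 1) (hcr2 : crossings γ2 l2 = 1) :
    (∃ s1 s2 u1 u2 : ℝ, fmap c1 c2 u1 u2 = -fmap c1 c2 s1 s2) ∧
    extDiam c1 c2 = Real.pi := by
  obtain ⟨a, b, hshell, -⟩ := exists_isShell_of_crossings_eq_one hper2 hgen2 hcr2
  exact stmt13_general hreg1 hreg2 hper1 hgen1 hc1 hc2 hcr1 hshell
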